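/- arXiv:2411.16307 — 5 statements merged into one kernel-verified Lean document; each statement's English description precedes it below -/
import Mathlib

section
/- The number of Veblen points of a Steiner triple system of order 31 is 0, 1, 3, or 31; moreover, if it is 31 (i.e., if the system has more than three Veblen points), then the system is isomorphic to the point-line design of PG(4,2), i.e., to the system whose points are the nonzero vectors of GF(2)^5 and whose triples are the sets {u,v,w} of distinct nonzero vectors with u+v+w=0. -/
/-!
Adjoining a neutral element `0` to a Steiner triple system turns it into its *Steiner loop*: the
commutative loop with `x + x = 0` in which `x + y` is the third point of the triple through `x` and
`y`, so that `x + (x + y) = y`.  A point is a Veblen point exactly when it lies in the centre `Z`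
of this loop (`veblen_iff`), hence the number of Veblen points is `|Z| - 1`.

The centre is an elementary abelian 2-group, so `|Z|` is a power of two (`card_center`), and for
order 31 it is at most 32.  If `|Z| ≥ 8`, then `Z` has at most four cosets in the loop of order 32,
so the loop is covered by `Z`, `Z + x`, `Z + y`, `Z + (x + y)` for suitable `x`, `y`
(`exists_cover`).  Sums of elements of these cosets reduce to sums in `{0, x, y, x + y}`, which is
associative by total symmetry, so the whole loop is associative (`center_eq_univ_of_cover`).
Hence `|Z| = 32`, and the loop is the additive group of a five-dimensional vector space over
`GF(2)` (`exists_vec_equiv`), whose Steiner triple system is `PG(4,2)`.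
-/

universe u v

/-- `T` is the triple set of a Steiner triple system on the point set `α`:
every member of `T` has three elements, and every pair of distinct points
lies in exactly one member of `T`. -/
def IsSTS {α : Type u} (T : Set (Finset α)) : Prop :=
  (∀ t ∈ T, t.card = 3) ∧
  ∀ a b : α, a ≠ b → ∃! t : Finset α, t ∈ T ∧ a ∈ t ∧ b ∈ t

/-- `x` is a Veblen point of the Steiner triple system with triple set `T`:
whenever `{x,a,b}`, `{x,c,d}` and `{t,a,c}` are triples, so is `{t,b,d}`. -/
def IsVeblen {α : Type u} [DecidableEq α] (T : Set (Finset α)) (x : α) : Prop :=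
  ∀ a b c d t : α, ({x, a, b} : Finset α) ∈ T → ({x, c, d} : Finset α) ∈ T →
    ({t, a, c} : Finset α) ∈ T → ({t, b, d} : Finset α) ∈ T

/-- Isomorphism of Steiner triple systems: a bijection of the point sets carrying
the triples of one system exactly onto the triples of the other. -/
def STSIso {α : Type u} {β : Type v} [DecidableEq β]
    (T₁ : Set (Finset α)) (T₂ : Set (Finset β)) : Prop :=
  ∃ e : α ≃ β, ∀ t : Finset α, t ∈ T₁ ↔ t.image (e : α → β) ∈ T₂

/-- The points of the quotient system at a point `x`: the triples through `x`. -/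
abbrev QuotPts {α : Type u} (T : Set (Finset α)) (x : α) : Type u :=
  {t : Finset α // t ∈ T ∧ x ∈ t}

/-- The triples of the quotient system at a Veblen point `x`: three distinct
triples `T1`, `T2`, `T3` through `x` form a triple iff there are `a ∈ T1 \ {x}`
and `c ∈ T2 \ {x}` such that the third point of the triple through `a` and `c`
lies in `T3`. -/
def QuotTriples {α : Type u} [DecidableEq α] (T : Set (Finset α)) (x : α) :
    Set (Finset (QuotPts T x)) :=
  {b | ∃ T1 T2 T3 : QuotPts T x, T1 ≠ T2 ∧ T1 ≠ T3 ∧ T2 ≠ T3 ∧ b = {T1, T2, T3} ∧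
      ∃ a ∈ T1.1, a ≠ x ∧ ∃ c ∈ T2.1, c ≠ x ∧
        ∃ d, ({a, c, d} : Finset α) ∈ T ∧ d ∈ T3.1}

/-- The nonzero vectors of `GF(2)^n`, i.e. the points of `PG(n-1,2)`. -/
abbrev PGPt (n : ℕ) : Type := {u : Fin n → ZMod 2 // u ≠ 0}

/-- The lines of `PG(n-1,2)`: sets `{u,v,w}` of distinct nonzero vectors of
`GF(2)^n` with `u + v + w = 0`. -/
def PGTriples (n : ℕ) : Set (Finset (PGPt n)) :=
  {t | ∃ u v w : PGPt n, u ≠ v ∧ u ≠ w ∧ v ≠ w ∧ t = {u, v, w} ∧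
      u.1 + v.1 + w.1 = 0}

/-- The system contains a Pasch configuration: six distinct points
`x, a, b, c, d, t` with `{x,a,b}`, `{x,c,d}`, `{t,a,c}`, `{t,b,d}` all triples. -/
def HasPasch {α : Type u} [DecidableEq α] (T : Set (Finset α)) : Prop :=
  ∃ x a b c d t : α, ({x, a, b, c, d, t} : Finset α).card = 6 ∧
    ({x, a, b} : Finset α) ∈ T ∧ ({x, c, d} : Finset α) ∈ T ∧
    ({t, a, c} : Finset α) ∈ T ∧ ({t, b, d} : Finset α) ∈ T

/-! ### Steiner loops and their centres -/

/-- A Steiner loop, written additively: a commutative loop with `a + a = 0` which is totally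
symmetric, i.e. `a + (a + b) = b`. -/
class SteinerLoop (L : Type u) extends Add L, Zero L where
  zero_add' : ∀ a : L, 0 + a = a
  add_self' : ∀ a : L, a + a = 0
  add_comm' : ∀ a b : L, a + b = b + a
  add_cancel' : ∀ a b : L, a + (a + b) = b

namespace SteinerLoop

section

variable {L : Type u} [SteinerLoop L]

lemma add_zero' (a : L) : a + 0 = a := by rw [add_comm', zero_add']

lemma add_cancel_right' (a b : L) : (a + b) + b = a := by
  rw [add_comm' (a + b), add_comm' a, add_cancel']

lemma add_cancel_mid (a b : L) : a + (b + a) = b := by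
  rw [add_comm' b, add_cancel']

lemma add_cancel_left' (a b : L) : (a + b) + a = b := by
  rw [add_comm', add_cancel']

lemma add_left_inj' {a b c : L} (h : a + b = a + c) : b = c := by
  rw [← add_cancel' a b, h, add_cancel']

variable (L) in
/-- The centre of a Steiner loop.  By commutativity, associativity with the central element in the
first position is enough. -/
def center : Set L := {z | ∀ a b : L, z + (a + b) = (z + a) + b}

lemma zero_mem_center : (0 : L) ∈ center L := by
  intro a b
  simp [zero_add']

lemma add_mem_center {y z : L} (hy : y ∈ center L) (hz : z ∈ center L) : y + z ∈ center L := by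
  intro a b
  rw [← hy, hz, hy, hy]

/-- The loop form of the Veblen condition characterizes the centre. -/
lemma mem_center_iff {z : L} :
    z ∈ center L ↔ ∀ a b : L, (z + a) + (z + b) = a + b := by
  constructor
  · intro hz a b
    rw [← hz, add_comm' a, ← hz, add_cancel', add_comm']
  · intro h a b
    have h1 := h a (z + ((z + a) + b))
    rw [add_cancel', add_cancel'] at h1
    have h2 : z + ((z + a) + b) = a + b := by
      apply add_left_inj' (a := a)
      rw [← h1, add_cancel']
    rw [← h2, add_cancel']

/-- Central summands can be collected in front of a sum. -/
lemma center_add_add {y z : L} (hy : y ∈ center L) (hz : z ∈ center L) (a b : L) :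
    (y + a) + (z + b) = (y + z) + (a + b) := by
  rw [← hy, add_comm' a, ← hz, hy, add_comm' b]

variable (L) in
/-- The centre is an abelian group under the loop operation. -/
@[reducible]
noncomputable def centerGroup : AddCommGroup (center L) :=
  letI : Add (center L) := ⟨fun a b => ⟨a.1 + b.1, add_mem_center a.2 b.2⟩⟩
  letI : Zero (center L) := ⟨⟨0, zero_mem_center⟩⟩
  letI : Neg (center L) := ⟨fun a => a⟩
  { add_assoc := fun a b c => Subtype.ext (a.2 b.1 c.1).symm
    zero_add := fun a => Subtype.ext (zero_add' a.1)
    add_zero := fun a => Subtype.ext (add_zero' a.1)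
    neg_add_cancel := fun a => Subtype.ext (add_self' a.1)
    add_comm := fun a b => Subtype.ext (add_comm' a.1 b.1)
    nsmul := nsmulRec
    zsmul := zsmulRec }

/-- A finite abelian group of exponent two is coordinatized by a power of `ZMod 2`. -/
lemma exists_coord (G : Type u) [AddCommGroup G] [Finite G] (h : ∀ a : G, a + a = 0) :
    ∃ n : ℕ, Nonempty (G ≃+ (Fin n → ZMod 2)) := by
  let : Module (ZMod 2) G := AddCommGroup.zmodModule (n := 2) (fun x => by
    rw [two_nsmul, h])
  have : Module.Finite (ZMod 2) G := Module.Finite.of_finite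
  exact ⟨_, ⟨(Module.finBasis (ZMod 2) G).equivFun.toAddEquiv⟩⟩

lemma card_center [Finite L] : ∃ n : ℕ, (center L).ncard = 2 ^ n := by
  let := centerGroup L
  obtain ⟨n, ⟨e⟩⟩ := exists_coord (center L) (fun a => Subtype.ext (add_self' a.1))
  refine ⟨n, ?_⟩
  rw [← Nat.card_coe_set_eq, Nat.card_congr e.toEquiv]
  simp

/-- The Steiner loop is associative as soon as at most four cosets of the centre cover it. -/
lemma center_eq_univ_of_cover (x y : L)
    (h : ∀ a : L, ∃ z ∈ center L, ∃ s, (s = 0 ∨ s = x ∨ s = y ∨ s = x + y) ∧ a = z + s) :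
    center L = Set.univ := by
  have key : ∀ p q r : L, (p = 0 ∨ p = x ∨ p = y ∨ p = x + y) →
      (q = 0 ∨ q = x ∨ q = y ∨ q = x + y) → (r = 0 ∨ r = x ∨ r = y ∨ r = x + y) →
      p + (q + r) = (p + q) + r := by
    have hyx : y + x = x + y := add_comm' _ _
    rintro p q r (rfl | rfl | rfl | rfl) (rfl | rfl | rfl | rfl) (rfl | rfl | rfl | rfl) <;>
      simp [zero_add', add_zero', add_self', add_cancel', add_cancel_right', add_cancel_mid,
        add_cancel_left', hyx]
  refine Set.eq_univ_of_forall fun a b c => ?_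
  obtain ⟨a', ha', p, hp, rfl⟩ := h a
  obtain ⟨b', hb', q, hq, rfl⟩ := h b
  obtain ⟨c', hc', r, hr, rfl⟩ := h c
  rw [center_add_add hb' hc', center_add_add ha' (add_mem_center hb' hc'),
    center_add_add ha' hb', center_add_add (add_mem_center ha' hb') hc', key p q r hp hq hr,
    ha' b' c']

lemma exists_cover [Finite L] (hL : Nat.card L ≤ 4 * (center L).ncard) :
    ∃ x y : L, ∀ a : L, ∃ z ∈ center L, ∃ s,
      (s = 0 ∨ s = x ∨ s = y ∨ s = x + y) ∧ a = z + s := by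
  by_cases h1 : ∀ x : L, x ∈ center L
  · exact ⟨0, 0, fun a => ⟨a, h1 a, 0, Or.inl rfl, (add_zero' a).symm⟩⟩
  push Not at h1
  obtain ⟨x, hx⟩ := h1
  by_cases h2 : ∀ y : L, y ∈ center L ∨ x + y ∈ center L
  · refine ⟨x, 0, fun a => ?_⟩
    rcases h2 a with h | h
    · exact ⟨a, h, 0, Or.inl rfl, (add_zero' a).symm⟩
    · exact ⟨x + a, h, x, Or.inr (Or.inl rfl), (add_cancel_left' x a).symm⟩
  push Not at h2
  obtain ⟨y, hy, hxy⟩ := h2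
  refine ⟨x, y, ?_⟩
  -- The four cosets are disjoint, so by counting they exhaust the loop.
  let s : Fin 4 → L := ![0, x, y, x + y]
  have hs : ∀ i j, s i + s j ∈ center L → i = j := by
    have hyx : y + x = x + y := add_comm' _ _
    intro i j
    fin_cases i <;> fin_cases j <;>
      simp [s, zero_add', add_zero', add_self', add_cancel', add_cancel_right', add_cancel_mid,
        add_cancel_left', hyx, hx, hy, hxy]
  let F : center L × Fin 4 → L := fun p => p.1.1 + s p.2
  have hF : Function.Injective F := by
    rintro ⟨⟨z, hz⟩, i⟩ ⟨⟨z', hz'⟩, j⟩ h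
    have h' : z + s i = z' + s j := h
    have h3 : (z + z') + (s i + s j) = 0 := by
      rw [← center_add_add hz hz', h', add_self']
    have h4 : s i + s j = z + z' := by
      rw [← add_cancel' (z + z') (s i + s j), h3, add_zero']
    obtain rfl := hs i j (h4 ▸ add_mem_center hz hz')
    rw [add_comm' z, add_comm' z'] at h'
    obtain rfl := add_left_inj' h'
    rfl
  have hbij : Function.Bijective F := by
    refine hF.bijective_of_nat_card_le ?_
    rw [Nat.card_prod, Nat.card_coe_set_eq, Nat.card_fin, mul_comm]
    exact hL
  intro a
  obtain ⟨⟨z, i⟩, rfl⟩ := hbij.2 a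
  refine ⟨z.1, z.2, s i, ?_, rfl⟩
  fin_cases i <;> simp [s]

lemma exists_vec_equiv [Finite L] {n : ℕ} (hL : Nat.card L = 2 ^ n)
    (h : center L = Set.univ) :
    ∃ e : L ≃ (Fin n → ZMod 2), ∀ a b, e (a + b) = e a + e b := by
  let := centerGroup L
  obtain ⟨m, ⟨e⟩⟩ := exists_coord (center L) (fun a => Subtype.ext (add_self' a.1))
  let g : L ≃ center L := ((Equiv.setCongr h).trans (Equiv.Set.univ L)).symm
  have hm : m = n := by
    have h1 : Nat.card L = 2 ^ m := by
      rw [Nat.card_congr (g.trans e.toEquiv)]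
      simp
    exact Nat.pow_right_injective le_rfl (h1.symm.trans hL)
  subst hm
  exact ⟨g.trans e.toEquiv, fun a b => e.map_add (g a) (g b)⟩

end

end SteinerLoop

/-! ### The Steiner loop of a Steiner triple system -/

section

open SteinerLoop

variable {α : Type u} [DecidableEq α] {T : Set (Finset α)}

lemma IsSTS.ne (hT : IsSTS T) {a b c : α} (h : ({a, b, c} : Finset α) ∈ T) :
    a ≠ b ∧ a ≠ c ∧ b ≠ c :=
  Finset.card_triple_eq_three_iff.mp (hT.1 _ h)

lemma IsSTS.exists_third (hT : IsSTS T) :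
    ∃ f : α → α → α, ∀ a b, a ≠ b → ∀ c, ({a, b, c} : Finset α) ∈ T ↔ f a b = c := by
  have H : ∀ a b : α, ∃ d, a ≠ b → ∀ c, ({a, b, c} : Finset α) ∈ T ↔ d = c := by
    intro a b
    by_cases hab : a = b
    · exact ⟨a, fun h => absurd hab h⟩
    obtain ⟨t, ⟨htT, hat, hbt⟩, huniq⟩ := hT.2 a b hab
    have hsub : ({a, b} : Finset α) ⊆ t := by
      intro i hi
      simp at hi
      rcases hi with rfl | rfl <;> assumption
    have hc : (t \ {a, b}).card = 1 := by
      rw [Finset.card_sdiff_of_subset hsub, hT.1 t htT, Finset.card_pair hab]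
    obtain ⟨d, hd⟩ := Finset.card_eq_one.mp hc
    have ht : t = {a, b, d} := by
      rw [← Finset.union_sdiff_of_subset hsub, hd]
      ext; simp
    refine ⟨d, fun _ c => ⟨fun hcT => ?_, ?_⟩⟩
    · have h1 : ({a, b, c} : Finset α) = {a, b, d} := by
        rw [← ht]
        exact huniq _ ⟨hcT, by simp, by simp⟩
      have h2 : d ∈ ({a, b, c} : Finset α) := by rw [h1]; simp
      have h3 := hT.ne (ht ▸ htT)
      simp at h2
      rcases h2 with rfl | rfl | rfl
      · exact absurd rfl h3.2.1
      · exact absurd rfl h3.2.2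
      · rfl
    · rintro rfl
      exact ht ▸ htT
  choose f hf using H
  exact ⟨f, hf⟩

/-- The sum in the Steiner loop: `none` is the neutral element, and the sum of two distinct points
is the third point `f a b` of their triple. -/
def loopAdd (f : α → α → α) : Option α → Option α → Option α
  | none, b => b
  | some a, none => some a
  | some a, some b => if a = b then none else some (f a b)

lemma triple_swap₁₂ (a b c : α) : ({a, b, c} : Finset α) = {b, a, c} := by
  ext; simp; tauto

lemma triple_swap₂₃ (a b c : α) : ({a, b, c} : Finset α) = {a, c, b} := by
  ext; simp; tauto

/-- The Steiner loop on `Option α`, with the property that determines its operation. -/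
lemma IsSTS.exists_loop (hT : IsSTS T) :
    ∃ I : SteinerLoop (Option α), I.zero = none ∧
      ∀ a b c : α, I.add (some a) (some b) = some c ↔ ({a, b, c} : Finset α) ∈ T := by
  obtain ⟨f, hf⟩ := hT.exists_third
  have hmem : ∀ a b, a ≠ b → ({a, b, f a b} : Finset α) ∈ T := fun a b h => (hf a b h _).2 rfl
  refine ⟨{ add := loopAdd f, zero := none, zero_add' := ?_, add_self' := ?_, add_comm' := ?_,
            add_cancel' := ?_ }, rfl, ?_⟩
  · intro a
    rfl
  · rintro (_ | a)
    · rfl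
    · exact if_pos rfl
  · rintro (_ | a) (_ | b)
    · rfl
    · rfl
    · rfl
    · change loopAdd f _ _ = loopAdd f _ _
      by_cases h : a = b
      · subst h; rfl
      · have h' : b ≠ a := fun e => h e.symm
        have : f a b = f b a := by
          rw [← hf a b h, triple_swap₁₂]
          exact hmem b a h'
        simp [loopAdd, h, h', this]
  · rintro (_ | a) (_ | b)
    · rfl
    · rfl
    · exact if_pos rfl
    · change loopAdd f _ (loopAdd f _ _) = _
      by_cases h : a = b
      · subst h; simp [loopAdd]
      · have h1 := hmem a b h
        have h2 := (hT.ne h1).2.1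
        rw [triple_swap₂₃, hf _ _ h2] at h1
        simp [loopAdd, h, h2, h1]
  · intro a b c
    change loopAdd f _ _ = _ ↔ _
    by_cases h : a = b
    · subst h
      have : ({a, a, c} : Finset α) ∉ T := fun h => (hT.ne h).1 rfl
      simp only [this, iff_false]
      simp [loopAdd]
    · simp [loopAdd, h, hf a b h]

lemma veblen_iff (I : SteinerLoop (Option α)) (h0 : I.zero = none)
    (hI : ∀ a b c : α, I.add (some a) (some b) = some c ↔ ({a, b, c} : Finset α) ∈ T) (x : α) :
    IsVeblen T x ↔ some x ∈ center (Option α) := by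
  replace h0 : (0 : Option α) = none := h0
  replace hI : ∀ a b c : α, some a + some b = some c ↔ ({a, b, c} : Finset α) ∈ T := hI
  rw [mem_center_iff]
  constructor
  · intro hx a c
    rcases a with _ | a
    · rw [← h0, add_zero', add_cancel', zero_add']
    rcases c with _ | c
    · rw [← h0, add_zero', add_zero', add_cancel_left']
    by_cases hac : a = c
    · subst hac; rw [add_self', add_self']
    -- Two distinct points have a nonzero sum, i.e. a point.
    have hsum : ∀ p q : α, p ≠ q → ∃ r, some p + some q = some r := by
      intro p q hpq
      rcases hr : some p + some q with _ | r
      · have := add_cancel' (some p) (some q)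
        rw [hr, ← h0, add_zero'] at this
        exact absurd (Option.some.inj this) hpq
      · exact ⟨r, rfl⟩
    by_cases hxa : x = a
    · subst hxa; rw [add_self', zero_add']
    by_cases hxc : x = c
    · subst hxc; rw [add_self', add_zero', SteinerLoop.add_comm']
    obtain ⟨b, hb⟩ := hsum x a hxa
    obtain ⟨d, hd⟩ := hsum x c hxc
    obtain ⟨t, ht⟩ := hsum a c hac
    have h3 : some t + some a = some c := by rw [← ht, add_cancel_left']
    have := (hI _ _ _).2 (hx a b c d t ((hI _ _ _).1 hb) ((hI _ _ _).1 hd) ((hI _ _ _).1 h3))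
    rw [hb, hd, ht, ← this, add_cancel_mid]
  · intro hx a b c d t h1 h2 h3
    rw [← hI] at h1 h2 h3 ⊢
    have := hx (some a) (some c)
    rw [h1, h2, ← h3, add_cancel_mid] at this
    rw [← this, add_cancel_left']

/-- A coordinatization of the Steiner loop restricts to an isomorphism onto `PG(n-1,2)`. -/
lemma iso_of_equiv (hT : IsSTS T) (I : SteinerLoop (Option α)) (h0 : I.zero = none)
    (hI : ∀ a b c : α, I.add (some a) (some b) = some c ↔ ({a, b, c} : Finset α) ∈ T)
    {n : ℕ} (e : Option α ≃ (Fin n → ZMod 2)) (he : ∀ a b, e (a + b) = e a + e b) :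
    STSIso T (PGTriples n) := by
  replace h0 : (0 : Option α) = none := h0
  replace hI : ∀ a b c : α, some a + some b = some c ↔ ({a, b, c} : Finset α) ∈ T := hI
  have he0 : e none = 0 := by
    have := he 0 0
    rw [zero_add', h0] at this
    simpa using this
  have hne : ∀ a, e (some a) ≠ 0 := fun a h => by
    rw [← he0] at h
    simpa using e.injective h
  let g : α → PGPt n := fun a => ⟨e (some a), hne a⟩
  have hg : Function.Bijective g := by
    constructor
    · intro a b h
      exact Option.some.inj (e.injective (congrArg Subtype.val h))
    · rintro ⟨w, hw⟩
      rcases ha : e.symm w with _ | a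
      · rw [Equiv.symm_apply_eq, he0] at ha
        exact absurd ha hw
      · exact ⟨a, Subtype.ext (by rw [Equiv.symm_apply_eq] at ha; exact ha.symm)⟩
  have hneg : ∀ u v w : Fin n → ZMod 2, u + v + w = 0 ↔ u + v = w := by
    intro u v w
    have hw : -w = w := funext fun i => ZMod.neg_eq_self_mod_two (w i)
    rw [add_eq_zero_iff_eq_neg, hw]
  have hrel : ∀ a b c : α, (g a).1 + (g b).1 + (g c).1 = 0 ↔ ({a, b, c} : Finset α) ∈ T := by
    intro a b c
    rw [hneg, ← hI]
    change e (some a) + e (some b) = e (some c) ↔ _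
    rw [← he]
    exact e.injective.eq_iff
  refine ⟨Equiv.ofBijective g hg, fun t => ?_⟩
  rw [Equiv.coe_ofBijective]
  constructor
  · intro ht
    obtain ⟨a, b, c, hab, hac, hbc, rfl⟩ := Finset.card_eq_three.mp (hT.1 t ht)
    exact ⟨g a, g b, g c, hg.1.ne hab, hg.1.ne hac, hg.1.ne hbc, by simp [Finset.image_insert],
      (hrel a b c).2 ht⟩
  · rintro ⟨p, q, r, -, -, -, ht, hs⟩
    obtain ⟨a, rfl⟩ := hg.2 p
    obtain ⟨b, rfl⟩ := hg.2 q
    obtain ⟨c, rfl⟩ := hg.2 r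
    have : t = {a, b, c} := by
      apply Finset.image_injective hg.1
      rw [ht]
      simp [Finset.image_insert]
    rw [this]
    exact (hrel a b c).1 hs

end

/-- The number of Veblen points of a Steiner triple system of order 31 is
`0`, `1`, `3` or `31`; moreover if it exceeds `3` then the system is isomorphic
to the point-line design of `PG(4,2)`. -/
theorem sts31_veblen_possibilities {α : Type u} [DecidableEq α] [Fintype α]
    (T : Set (Finset α)) (hcard : Fintype.card α = 31) (hT : IsSTS T) :
    ({x : α | IsVeblen T x}.ncard = 0 ∨ {x : α | IsVeblen T x}.ncard = 1 ∨
      {x : α | IsVeblen T x}.ncard = 3 ∨ {x : α | IsVeblen T x}.ncard = 31) ∧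
    (3 < {x : α | IsVeblen T x}.ncard → STSIso T (PGTriples 5)) := by
  obtain ⟨I, h0, hI⟩ := hT.exists_loop
  have hL : Nat.card (Option α) = 2 ^ 5 := by simp [hcard]
  have hZ : SteinerLoop.center (Option α) = insert none (some '' {x : α | IsVeblen T x}) := by
    ext (_ | x)
    · have : (none : Option α) ∈ SteinerLoop.center (Option α) :=
        h0 ▸ SteinerLoop.zero_mem_center
      simp [this]
    · simp [veblen_iff I h0 hI]
  have hcardZ : (SteinerLoop.center (Option α)).ncard = {x : α | IsVeblen T x}.ncard + 1 := by
    rw [hZ, Set.ncard_insert_of_notMem (by simp),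
      Set.ncard_image_of_injective _ (Option.some_injective α)]
  obtain ⟨n, hn⟩ := SteinerLoop.card_center (L := Option α)
  have hbig : 3 < {x : α | IsVeblen T x}.ncard →
      SteinerLoop.center (Option α) = Set.univ := by
    intro h
    -- A power of two exceeding 4 is at least 8.
    have hn3 : 3 ≤ n := by
      by_contra! hlt
      interval_cases n <;> omega
    have h8 : 2 ^ 3 ≤ 2 ^ n := Nat.pow_le_pow_right (by norm_num) hn3
    obtain ⟨x, y, hxy⟩ := SteinerLoop.exists_cover (L := Option α) (by omega)
    exact SteinerLoop.center_eq_univ_of_cover x y hxy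
  refine ⟨?_, fun h => ?_⟩
  · by_cases h : 3 < {x : α | IsVeblen T x}.ncard
    · rw [hbig h, Set.ncard_univ, hL] at hcardZ
      omega
    · have hn2 : n < 3 := by
        by_contra! hge
        have h8 : 2 ^ 3 ≤ 2 ^ n := Nat.pow_le_pow_right (by norm_num) hge
        omega
      interval_cases n <;> omega
  · obtain ⟨e, he⟩ := SteinerLoop.exists_vec_equiv hL (hbig h)
    exact iso_of_equiv hT I h0 hI e he
end

section
/- Let f be the function assigning 0 in GF(2) to every line of AG(2,3). Then the incidence structure S(f) is a Steiner triple system of order 19, and its unique Veblen point is the point (*,1). -/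
/-!
The triples of `S(0)` are governed by the third-point operation `thirdPt`: off the fibres of
`(P, x) ↦ P` it sends `(P, x), (Q, y)` to `(-P - Q, x + y)`, while two points of one fibre are
collinear with `(*,1)`. Every triple is `{a, b, thirdPt a b}` for any two of its points
(`eq_of_mem`), and every such set with `a ≠ b` is a triple (`mem_trip`); hence `S(0)` is a Steiner
triple system and `{a, b, c}` is a triple iff `a ≠ b` and `c = thirdPt a b` (`trip_iff`).

The point `(*,1)` is Veblen because flipping both second coordinates leaves `x + y` unchanged.
A point `(P, x)` is not: with `v, w` independent in `GF(3)^2`, take `a, b` over `P ± v` and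
`c, d` over `P ± w`. Then `t` lies over `P - v - w`, and the points `t, b, d` lie over points of
`AG(2,3)` with sum `v + w ≠ 0`.
-/

universe u v

/-- The points of the affine plane `AG(2,3)`. -/
abbrev AGPt : Type := ZMod 3 × ZMod 3

/-- `L` is a line of `AG(2,3)`: a 3-element subset `{P,Q,R}` of `GF(3)^2`
with `P + Q + R = 0`. -/
def AGLine (L : Finset AGPt) : Prop :=
  ∃ P Q R : AGPt, P ≠ Q ∧ P ≠ R ∧ Q ≠ R ∧ L = {P, Q, R} ∧ P + Q + R = 0

/-- The point set of the extension construction: the extra point `(*,1)`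
(encoded as `none`) together with `GF(3)^2 × GF(2)`. -/
abbrev SPt19 : Type := Option (AGPt × ZMod 2)

/-- The triples of the incidence structure `S(f)` associated with a function `f`
on the lines of `AG(2,3)` with values in `GF(2)`:
(a) `{(*,1), (P,0), (P,1)}` for each point `P` of `AG(2,3)`, and
(b) `{(P,x), (Q,y), (R,z)}` for each line `{P,Q,R}` of `AG(2,3)` and
`x, y, z ∈ GF(2)` with `x + y + z = f {P,Q,R}`. -/
def STrip19 (f : Finset AGPt → ZMod 2) : Set (Finset SPt19) :=
  {t | (∃ P : AGPt, t = {none, some (P, 0), some (P, 1)}) ∨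
       (∃ (P Q R : AGPt) (x y z : ZMod 2), P ≠ Q ∧ P ≠ R ∧ Q ≠ R ∧ P + Q + R = 0 ∧
          x + y + z = f ({P, Q, R} : Finset AGPt) ∧
          t = {some (P, x), some (Q, y), some (R, z)})}

/-- The line `{(0,0),(0,1),(0,2)}` of `AG(2,3)`. -/
def agLine1 : Finset AGPt := {(0, 0), (0, 1), (0, 2)}

/-- The line `{(0,0),(1,0),(2,0)}` of `AG(2,3)`. -/
def agLine2 : Finset AGPt := {(0, 0), (1, 0), (2, 0)}

/-- The function on lines which is identically `0`. -/
def agf0 : Finset AGPt → ZMod 2 := fun _ => 0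

/-- The function on lines taking the value `1` exactly on `{(0,0),(0,1),(0,2)}`. -/
def agf1 : Finset AGPt → ZMod 2 := fun L => if L = agLine1 then 1 else 0

/-- The function on lines taking the value `1` exactly on the two lines
`{(0,0),(0,1),(0,2)}` and `{(0,0),(1,0),(2,0)}`. -/
def agf2 : Finset AGPt → ZMod 2 := fun L => if L = agLine1 ∨ L = agLine2 then 1 else 0

/-- The third point of the triple of `S(0)` through two distinct points; the value on the diagonal
is junk (`none`). -/
def thirdPt : SPt19 → SPt19 → SPt19
  | none, none => none
  | none, some (P, x) => some (P, x + 1)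
  | some (P, x), none => some (P, x + 1)
  | some (P, x), some (Q, y) => if P = Q then none else some (-P - Q, x + y)

lemma eq_add_of_sum_zero {x y z : ZMod 2} (h : x + y + z = 0) : z = x + y := by
  revert x y z; decide

lemma ag_ne {P Q : AGPt} (h : P ≠ Q) : P ≠ -P - Q ∧ Q ≠ -P - Q := by
  revert P Q; decide

lemma fibre_mem (P : AGPt) (x : ZMod 2) :
    ({none, some (P, x), some (P, x + 1)} : Finset SPt19) ∈ STrip19 agf0 := by
  refine Or.inl ⟨P, ?_⟩
  revert P x; decide

lemma mem_trip {a b : SPt19} (h : a ≠ b) :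
    ({a, b, thirdPt a b} : Finset SPt19) ∈ STrip19 agf0 := by
  rcases a with _ | ⟨P, x⟩ <;> rcases b with _ | ⟨Q, y⟩
  · exact absurd rfl h
  · exact fibre_mem Q y
  · rw [Finset.insert_comm]
    exact fibre_mem P x
  · by_cases hPQ : P = Q
    · subst hPQ
      have hy : y = x + 1 := by
        have hxy : x ≠ y := fun e => h (by rw [e])
        clear h
        revert x y; decide
      subst hy
      have e : ({some (P, x), some (P, x + 1), thirdPt (some (P, x)) (some (P, x + 1))} :
          Finset SPt19) = {none, some (P, x), some (P, x + 1)} := by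
        ext p; simp [thirdPt]; tauto
      rw [e]
      exact fibre_mem P x
    · refine Or.inr ⟨P, Q, -P - Q, x, y, x + y, hPQ, (ag_ne hPQ).1, (ag_ne hPQ).2, by abel, ?_, ?_⟩
      · change x + y + (x + y) = 0
        clear h
        revert x y; decide
      · simp [thirdPt, hPQ]

lemma eq_of_mem {t : Finset SPt19} (ht : t ∈ STrip19 agf0) {a b : SPt19} (ha : a ∈ t)
    (hb : b ∈ t) (h : a ≠ b) : t = {a, b, thirdPt a b} := by
  rcases ht with ⟨P, rfl⟩ | ⟨P, Q, R, x, y, z, hPQ, hPR, hQR, hs, hf, rfl⟩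
  · simp only [Finset.mem_insert, Finset.mem_singleton] at ha hb
    rcases ha with rfl | rfl | rfl <;> rcases hb with rfl | rfl | rfl <;>
      first
      | exact absurd rfl h
      | (clear h; revert P; decide)
  · have hf : x + y + z = 0 := hf
    have hz := eq_add_of_sum_zero hf
    have hy : y = x + z := eq_add_of_sum_zero (by rw [← hf]; ring)
    have hx : x = y + z := eq_add_of_sum_zero (by rw [← hf]; ring)
    have hR : -P - Q = R := by linear_combination -hs
    have hQ : -P - R = Q := by linear_combination -hs
    have hP : -Q - R = P := by linear_combination -hs
    have hR' : -Q - P = R := by linear_combination -hs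
    have hQ' : -R - P = Q := by linear_combination -hs
    have hP' : -R - Q = P := by linear_combination -hs
    have e1 : thirdPt (some (P, x)) (some (Q, y)) = some (R, z) := by
      simp [thirdPt, hPQ, hR, ← hz]
    have e2 : thirdPt (some (Q, y)) (some (P, x)) = some (R, z) := by
      simp [thirdPt, hPQ.symm, hR', add_comm y x, ← hz]
    have e3 : thirdPt (some (P, x)) (some (R, z)) = some (Q, y) := by
      simp [thirdPt, hPR, hQ, ← hy]
    have e4 : thirdPt (some (R, z)) (some (P, x)) = some (Q, y) := by
      simp [thirdPt, hPR.symm, hQ', add_comm z x, ← hy]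
    have e5 : thirdPt (some (Q, y)) (some (R, z)) = some (P, x) := by
      simp [thirdPt, hQR, hP, ← hx]
    have e6 : thirdPt (some (R, z)) (some (Q, y)) = some (P, x) := by
      simp [thirdPt, hQR.symm, hP', add_comm z y, ← hx]
    clear hx hy hz hf hP hQ hR hP' hQ' hR'
    simp only [Finset.mem_insert, Finset.mem_singleton] at ha hb
    rcases ha with rfl | rfl | rfl <;> rcases hb with rfl | rfl | rfl <;>
      first
      | exact absurd rfl h
      | rw [e1]
      | (simp only [e2, e3, e4, e5, e6]
         ext p
         simp only [Finset.mem_insert, Finset.mem_singleton]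
         tauto)

lemma card_trip {t : Finset SPt19} (ht : t ∈ STrip19 agf0) : t.card = 3 := by
  rcases ht with ⟨P, rfl⟩ | ⟨P, Q, R, x, y, z, hPQ, hPR, hQR, -, -, rfl⟩
  · revert P; decide
  · exact Finset.card_eq_three.2 ⟨_, _, _, by simp [hPQ], by simp [hPR], by simp [hQR], rfl⟩

lemma trip_iff {a b c : SPt19} :
    ({a, b, c} : Finset SPt19) ∈ STrip19 agf0 ↔ a ≠ b ∧ c = thirdPt a b := by
  constructor
  · intro ht
    have hc := card_trip ht
    have hab : a ≠ b := by
      rintro rfl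
      have := Finset.card_le_two (a := a) (b := c)
      simp only [Finset.insert_idem] at hc
      omega
    have hac : c ≠ a := by
      rintro rfl
      have := Finset.card_le_two (a := b) (b := c)
      rw [Finset.insert_eq_of_mem (by simp)] at hc
      omega
    have hbc : c ≠ b := by
      rintro rfl
      have := Finset.card_le_two (a := a) (b := c)
      simp only [Finset.pair_eq_singleton] at hc
      omega
    refine ⟨hab, ?_⟩
    have e := eq_of_mem ht (a := a) (b := b) (by simp) (by simp) hab
    have hm : c ∈ ({a, b, c} : Finset SPt19) := by simp
    rw [e] at hm
    simpa [hac, hbc] using hm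
  · rintro ⟨h, rfl⟩
    exact mem_trip h

lemma isVeblen_none : IsVeblen (STrip19 agf0) (none : SPt19) := by
  intro a b c d t h1 h2 h3
  have e : ({t, a, c} : Finset SPt19) = {a, c, t} := by
    ext p; simp only [Finset.mem_insert, Finset.mem_singleton]; tauto
  have e' : ({t, b, d} : Finset SPt19) = {b, d, t} := by
    ext p; simp only [Finset.mem_insert, Finset.mem_singleton]; tauto
  rw [e] at h3
  rw [e']
  rw [trip_iff] at *
  obtain ⟨h1, rfl⟩ := h1
  obtain ⟨h2, rfl⟩ := h2
  obtain ⟨h3, rfl⟩ := h3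
  rcases a with _ | ⟨P, x⟩
  · exact absurd rfl h1
  rcases c with _ | ⟨Q, y⟩
  · exact absurd rfl h2
  have hxy : x + 1 + (y + 1) = x + y := by
    clear * -
    revert x y; decide
  refine ⟨fun hbd => h3 ?_, ?_⟩
  · simpa [thirdPt] using hbd
  · simp [thirdPt, hxy]

lemma not_isVeblen_some (P : AGPt) (x : ZMod 2) : ¬ IsVeblen (STrip19 agf0) (some (P, x)) := by
  intro h
  have h' := h (some (P + (1, 0), x)) (some (P - (1, 0), 0)) (some (P + (0, 1), x))
    (some (P - (0, 1), 0)) (some (P - (1, 0) - (0, 1), 0))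
    (trip_iff.2 (by clear h; revert P x; decide)) (trip_iff.2 (by clear h; revert P x; decide))
    (trip_iff.2 (by clear h; revert P x; decide))
  have h'' := (trip_iff.1 h').2
  clear h h'
  revert h''
  rw [imp_false]
  revert P x; decide

/-- For `f` identically `0` on the lines of `AG(2,3)`, the structure `S(f)` is a
Steiner triple system of order 19 whose unique Veblen point is `(*,1)`. -/
theorem sts19_from_f0 :
    Fintype.card SPt19 = 19 ∧ IsSTS (STrip19 agf0) ∧
    IsVeblen (STrip19 agf0) (none : SPt19) ∧
    ∀ y : SPt19, IsVeblen (STrip19 agf0) y → y = none := by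
  refine ⟨by decide, ⟨fun t ht => card_trip ht, fun a b h => ?_⟩, isVeblen_none, ?_⟩
  · exact ⟨_, ⟨mem_trip h, by simp, by simp⟩, fun t ht => eq_of_mem ht.1 ht.2.1 ht.2.2 h⟩
  · rintro (_ | ⟨P, x⟩) h
    · rfl
    · exact absurd h (not_isVeblen_some P x)
end

section
/- Let f0 be identically 0 on the lines of AG(2,3), let f1 take the value 1 exactly on the line {(0,0),(0,1),(0,2)}, and let f2 take the value 1 exactly on the two lines {(0,0),(0,1),(0,2)} and {(0,0),(1,0),(2,0)}. Then the three Steiner triple systems S(f0), S(f1), S(f2) of order 19 are pairwise non-isomorphic, and every Steiner triple system of order 19 with exactly one Veblen point is isomorphic to one of them. -/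
/-!
Let `x` be a Veblen point of a Steiner triple system of order 19 with third-point operation `m`. The
involution `a ↦ m x a` is compatible with `m`, so the nine triples through `x` form a Steiner triple
system of order 9. That system has no Pasch configuration (`no_pasch_of_card_nine`), which forces it
to be `AG(2,3)` (`exists_affine_coordinates`). Choosing a representative on each triple through `x`
identifies the original system with some `S(f)` (`exists_STSIso_STrip19`).

The isomorphism type of `S(f)` is controlled by the sums `s(d)` of `f` over the four parallel
classes of lines. Changing representatives adds to `f` a coboundary `{P,Q,R} ↦ c P + c Q + c R`,
which changes every `s(d)` by the same constant `∑ P, c P`. Conversely, let `c P` be the sum of `f` over the lines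
through `P`; adding its coboundary turns `f` into the function `L ↦ s(d) + const`, where `d` is the
direction of `L` (`lineVal_add_pointSum`). Hence `S(f) ≅ S(g)` once the class sums agree up to a
constant and a linear map (`STSIso_of_classSum`). Since `GL(2,3)` induces the full symmetric group
on the four directions, the weight of `s` modulo complementation is 0, 1 or 2, and these weights occur
for `f0`, `f1`, `f2`.

For non-isomorphism, the extra point is the only Veblen point of `S(f)`, so an isomorphism
`S(f) ≅ S(g)` comes from an affine map and a shift `c`, and the number of nonzero directions with
`s(d) = 1` is an invariant up to replacing `k` by `8 - k` (`oddCount_of_STSIso`). It is 0, 2, 4 for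
the three systems.
-/

universe u v

/-! ### The Steiner triple system of order 9 -/

section STS9
variable {β : Type v} (m : β → β → β)

theorem op_ne_left (idem : ∀ a, m a a = a) (inv : ∀ a b, m a (m a b) = b) {a b : β}
    (h : a ≠ b) : m a b ≠ a := fun h' => h (by rw [← inv a b, h', idem])

theorem exists_notMem_of_length_lt [Fintype β] (l : List β) (h : l.length < Fintype.card β) :
    ∃ a, a ∉ l := by
  classical
  by_contra! hs
  have h1 : l.toFinset = Finset.univ := Finset.eq_univ_of_forall (by simpa using hs)
  have h2 := l.toFinset_card_le
  rw [h1, Finset.card_univ] at h2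
  omega

theorem eq_of_notMem_nodup [Fintype β] (l : List β) (hl : l.Nodup)
    (h : l.length + 1 = Fintype.card β) {y z : β} (hy : y ∉ l) (hz : z ∉ l) : y = z := by
  by_contra hyz
  have h1 : (y :: z :: l).Nodup := by simp [*]
  have := h1.length_le_card
  simp at this
  omega

/-- A Steiner quasigroup of order 9 contains no Pasch configuration. If `x`, `t` are opposite points
of one and `u` is the third point on the line `x t`, then exactly two points `v`, `w` lie outside
the configuration and `u`, and counting forces both `x v w` and `t v w` to be triples. -/
theorem no_pasch_of_card_nine [Fintype β] (hc : Fintype.card β = 9) (idem : ∀ a, m a a = a)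
    (comm : ∀ a b, m a b = m b a) (inv : ∀ a b, m a (m a b) = b)
    {x a c : β} (h1 : x ≠ a) (h2 : x ≠ c) (h3 : a ≠ c) (h4 : m x a ≠ c) :
    m a c ≠ m (m x a) (m x c) := by
  classical
  intro hP
  have ne : ∀ {a b : β}, a ≠ b → m a b ≠ a := fun h => op_ne_left m idem inv h
  have ne' : ∀ {a b : β}, a ≠ b → m a b ≠ b := fun {a b} h => by rw [comm]; exact ne h.symm
  have key : ∀ {p q r : β}, q ≠ r → m p q ≠ m p r := fun {p q r} h h' => h (by
    rw [← inv p q, h', inv])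
  obtain ⟨b, hb⟩ : ∃ b, m x a = b := ⟨_, rfl⟩
  obtain ⟨d, hd⟩ : ∃ d, m x c = d := ⟨_, rfl⟩
  obtain ⟨t, ht⟩ : ∃ t, m a c = t := ⟨_, rfl⟩
  obtain ⟨u, hu⟩ : ∃ u, m x t = u := ⟨_, rfl⟩
  rw [hb, hd, ht] at hP
  rw [hb] at h4
  have hxb : m x b = a := by rw [← hb, inv]
  have hxd : m x d = c := by rw [← hd, inv]
  have hxu : m x u = t := by rw [← hu, inv]
  have hta : m t a = c := by rw [comm, ← ht, inv]
  have htc : m t c = a := by rw [comm, ← ht, comm a, inv]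
  have htb : m t b = d := by rw [hP, comm, inv]
  have htd : m t d = b := by rw [hP, comm, comm b, inv]
  have htx : m t x = u := by rw [comm, hu]
  have htu : m t u = x := by rw [← htx, inv]
  have e1 : x ≠ b := by grind
  have e2 : x ≠ d := by grind
  have e3 : a ≠ b := by grind
  have e4 : c ≠ d := by grind
  have e5 : b ≠ d := by grind
  have e6 : a ≠ d := by grind
  have f1 : t ≠ a := by grind
  have f2 : t ≠ c := by grind
  have f3 : t ≠ b := by grind
  have f4 : t ≠ d := by grind
  have f5 : t ≠ x := by grind
  have g1 : u ≠ x := by grind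
  have g2 : u ≠ t := by grind
  have g3 : u ≠ a := by grind
  have g4 : u ≠ b := by grind
  have g5 : u ≠ c := by grind
  have g6 : u ≠ d := by grind
  obtain ⟨v, hv⟩ := exists_notMem_of_length_lt [x, a, b, c, d, t, u] (by simp [hc])
  simp only [List.mem_cons, List.not_mem_nil, or_false, not_or] at hv
  obtain ⟨v1, v2, v3, v4, v5, v6, v7⟩ := hv
  have hn : [x, a, b, c, d, t, u, v].Nodup := by
    simp [*, Ne.symm, eq_comm]
    grind
  have k1 : m x v ∉ [x, a, b, c, d, t, u, v] := by
    have : ∀ y z, m x z = y → v ≠ z → m x v ≠ y := fun y z h h' => h ▸ key h'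
    simp only [List.mem_cons, List.not_mem_nil, or_false, not_or]
    refine ⟨ne (Ne.symm v1), this _ _ hxb v3, this _ _ hb v2, this _ _ hxd v5, this _ _ hd v4,
      this _ _ hxu v7, this _ _ hu v6, ne' (Ne.symm v1)⟩
  have k2 : m t v ∉ [x, a, b, c, d, t, u, v] := by
    have : ∀ y z, m t z = y → v ≠ z → m t v ≠ y := fun y z h h' => h ▸ key h'
    simp only [List.mem_cons, List.not_mem_nil, or_false, not_or]
    refine ⟨this _ _ htu v7, this _ _ htc v4, this _ _ htd v5, this _ _ hta v2, this _ _ htb v3,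
      ne (Ne.symm v6), this _ _ htx v1, ne' (Ne.symm v6)⟩
  have := eq_of_notMem_nodup _ hn (by simp [hc]) k1 k2
  rw [comm x, comm t] at this
  exact key f5.symm this

/-- The Steiner triple system of order 9 is unique: it is `AG(2,3)`, whose quasigroup operation is
`(P, Q) ↦ -(P + Q)`. -/
theorem exists_affine_coordinates [Fintype β] (hc : Fintype.card β = 9) (idem : ∀ a, m a a = a)
    (comm : ∀ a b, m a b = m b a) (inv : ∀ a b, m a (m a b) = b) :
    ∃ φ : AGPt ≃ β, ∀ P Q : AGPt, m (φ P) (φ Q) = φ (-(P + Q) : AGPt) := by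
  have ne : ∀ {a b : β}, a ≠ b → m a b ≠ a := fun h => op_ne_left m idem inv h
  have ne' : ∀ {a b : β}, a ≠ b → m a b ≠ b := fun {a b} h => by rw [comm]; exact ne h.symm
  have key : ∀ {p q r : β}, q ≠ r → m p q ≠ m p r := fun {p q r} h h' => h (by
    rw [← inv p q, h', inv])
  have pasch : ∀ {x a b c d t : β}, m x a = b → m x c = d → m a c = t → m b d = t →
      x ≠ a → x ≠ c → a ≠ c → b ≠ c → False := by
    intro x a b c d t hb hd ht ht' h1 h2 h3 h4
    refine no_pasch_of_card_nine m hc idem comm inv h1 h2 h3 (by rwa [hb]) ?_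
    rw [hb, hd, ht, ht']
  have perm : ∀ {a b c : β}, m a b = c →
      m a c = b ∧ m b a = c ∧ m b c = a ∧ m c a = b ∧ m c b = a := by
    rintro a b c rfl
    refine ⟨inv _ _, comm _ _, ?_, ?_, ?_⟩
    · rw [comm a, inv]
    · rw [comm, inv]
    · rw [comm, comm a, inv]
  obtain ⟨o, -⟩ := exists_notMem_of_length_lt ([] : List β) (by simp [hc])
  obtain ⟨p, hp⟩ := exists_notMem_of_length_lt [o] (by simp [hc])
  obtain ⟨q, hq⟩ := exists_notMem_of_length_lt [o, p, m o p] (by simp [hc])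
  simp only [List.mem_cons, List.not_mem_nil, or_false, not_or] at hp hq
  obtain ⟨q1, q2, q3⟩ := hq
  obtain ⟨p', hp'⟩ : ∃ b, m o p = b := ⟨_, rfl⟩
  obtain ⟨q', hq'⟩ : ∃ b, m o q = b := ⟨_, rfl⟩
  obtain ⟨A, hA⟩ : ∃ b, m p q = b := ⟨_, rfl⟩
  obtain ⟨B, hB⟩ : ∃ b, m p q' = b := ⟨_, rfl⟩
  obtain ⟨C, hC⟩ : ∃ b, m p' q = b := ⟨_, rfl⟩
  obtain ⟨D, hD⟩ : ∃ b, m p' q' = b := ⟨_, rfl⟩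
  rw [hp'] at q3
  have o1 : o ≠ p' := by grind
  have o2 : o ≠ q' := by grind
  have p1 : p ≠ p' := by grind
  have q4 : q ≠ q' := by grind
  obtain ⟨lp1, lp0, lp2, lp3, lp4⟩ := perm hp'
  obtain ⟨lq1, lq0, lq2, lq3, lq4⟩ := perm hq'
  have r1 : p ≠ q' := by grind
  have r2 : p' ≠ q' := by grind
  -- With origin `o`, the names stand for `p' = -p`, `q' = -q`, `A = -p - q`, `B = q - p`,
  -- `C = p - q`, `D = p + q`. The last four lie off the two lines `o p p'` and `o q q'`.
  have avoid : ∀ {a b c a' b' : β}, m o a = a' → m o b = b' → o ≠ a → o ≠ b → a ≠ b → a' ≠ b →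
      m a b = c → c ≠ o ∧ c ≠ a ∧ c ≠ a' ∧ c ≠ b ∧ c ≠ b' := by
    intro a b c a' b' ha hb h1 h2 h3 h4 hc
    have := perm ha
    have := perm hb
    have := perm hc
    refine ⟨?_, ?_, ?_, ?_, ?_⟩ <;> grind
  obtain ⟨A1, A2, A3, A4, A5⟩ := avoid hp' hq' (by grind) (by grind) (by grind) (by grind) hA
  obtain ⟨B1, B2, B3, B4, B5⟩ := avoid hp' lq1 (by grind) (by grind) (by grind) (by grind) hB
  obtain ⟨C1, C2, C3, C4, C5⟩ := avoid lp1 hq' (by grind) (by grind) (by grind) (by grind) hC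
  obtain ⟨D1, D2, D3, D4, D5⟩ := avoid lp1 lq1 (by grind) (by grind) (by grind) (by grind) hD
  obtain ⟨hA1, hA2, hA3, hA4, hA5⟩ := perm hA
  obtain ⟨hB1, hB2, hB3, hB4, hB5⟩ := perm hB
  obtain ⟨hC1, hC2, hC3, hC4, hC5⟩ := perm hC
  obtain ⟨hD1, hD2, hD3, hD4, hD5⟩ := perm hD
  have AB : A ≠ B := by rw [← hA, ← hB]; exact key q4
  have CD : C ≠ D := by rw [← hC, ← hD]; exact key q4
  have AC : A ≠ C := fun h => p1 (by rw [← hA5, ← hC5, h])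
  have BD : B ≠ D := fun h => p1 (by rw [← hB5, ← hD5, h])
  have AD : A ≠ D := fun h => pasch hp' hq' hA (h ▸ hD) (Ne.symm hp) (Ne.symm q1) (Ne.symm q2)
    (Ne.symm q3)
  have BC : B ≠ C := fun h => pasch hp' lq1 hB (h ▸ hC) (Ne.symm hp) o2 r1 r2
  have nodup : [o, p, p', q, q', A, B, C, D].Nodup := by
    simp only [List.nodup_cons, List.mem_cons, List.not_mem_nil, or_false, not_or,
      not_false_eq_true, List.nodup_nil, and_true]
    refine ⟨?_, ?_, ?_, ?_, ?_, ?_, ?_, ?_⟩ <;> grind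
  have cover : ∀ y, y ∈ [o, p, p', q, q', A, B, C, D] := by
    classical
    intro y
    by_contra hy
    have h1 := (List.nodup_cons.2 ⟨hy, nodup⟩).length_le_card
    simp [hc] at h1
  simp only [List.mem_cons, List.not_mem_nil, or_false] at cover
  -- The line `o A` cannot pass through `B` or `C` without closing a Pasch configuration; the other
  -- lines are then forced, each being the only one left through its first point.
  have oA : m o A = D := by
    have hB' : m o A ≠ B := fun h => pasch hq' h hA3 hB3 (Ne.symm q1) A1.symm A4.symm A5.symm
    have hC' : m o A ≠ C := fun h => pasch hp' h hA1 hC1 (Ne.symm hp) A1.symm A2.symm A3.symm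
    have := cover (m o A)
    grind
  have oB : m o B = C := by
    have := cover (m o B)
    have := perm oA
    grind
  have pC : m p C = D := by
    have := cover (m p C)
    grind
  have pA : m p' A = B := by
    have := cover (m p' A)
    grind
  have qB : m q B = D := by
    have := cover (m q B)
    grind
  have qA : m q' A = C := by
    have := cover (m q' A)
    grind
  obtain ⟨oA1, oA2, oA3, oA4, oA5⟩ := perm oA
  obtain ⟨oB1, oB2, oB3, oB4, oB5⟩ := perm oB
  obtain ⟨pC1, pC2, pC3, pC4, pC5⟩ := perm pC
  obtain ⟨pA1, pA2, pA3, pA4, pA5⟩ := perm pA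
  obtain ⟨qB1, qB2, qB3, qB4, qB5⟩ := perm qB
  obtain ⟨qA1, qA2, qA3, qA4, qA5⟩ := perm qA
  let g : AGPt → β := fun P =>
    (![![o, q, q'], ![p, D, C], ![p', B, A]] : Fin 3 → Fin 3 → β) P.1 P.2
  have gs : Function.Surjective g := by
    intro y
    rcases cover y with rfl | rfl | rfl | rfl | rfl | rfl | rfl | rfl | rfl
    exacts [⟨(0, 0), rfl⟩, ⟨(1, 0), rfl⟩, ⟨(2, 0), rfl⟩, ⟨(0, 1), rfl⟩, ⟨(0, 2), rfl⟩,
      ⟨(2, 2), rfl⟩, ⟨(2, 1), rfl⟩, ⟨(1, 2), rfl⟩, ⟨(1, 1), rfl⟩]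
  have gb : Function.Bijective g := gs.bijective_of_nat_card_le (by simp [hc])
  refine ⟨Equiv.ofBijective g gb, ?_⟩
  have hop : ∀ i j k l : Fin 3, m (g (i, j)) (g (k, l)) = g (-(i + k), -(j + l)) := by
    intro i j k l
    fin_cases i <;> fin_cases j <;> fin_cases k <;> fin_cases l <;>
      first | exact idem _ | assumption
  rintro ⟨i, j⟩ ⟨k, l⟩
  exact hop i j k l
end STS9

/-! ### Basic properties of `S(f)` and of isomorphisms -/

theorem ne_neg_add : ∀ P Q : AGPt, P ≠ Q → P ≠ -(P + Q) ∧ Q ≠ -(P + Q) := by decide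

theorem mem_STrip19_none {f : Finset AGPt → ZMod 2} {a b : SPt19} :
    ({none, a, b} : Finset SPt19) ∈ STrip19 f ↔
      ∃ (P : AGPt) (x : ZMod 2), a = some (P, x) ∧ b = some (P, x + 1) := by
  constructor
  · rintro (⟨P, h⟩ | ⟨P, Q, R, x, y, z, -, -, -, -, -, h⟩)
    · have h0 : some (P, 0) ∈ ({none, a, b} : Finset SPt19) := by simp [h]
      have h1 : some (P, 1) ∈ ({none, a, b} : Finset SPt19) := by simp [h]
      simp only [Finset.mem_insert, Finset.mem_singleton, reduceCtorEq, false_or] at h0 h1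
      have h01 : (some (P, 0) : SPt19) ≠ some (P, 1) := by simp
      rcases h0 with rfl | rfl
      · exact ⟨P, 0, rfl, (h1.resolve_left h01.symm).symm⟩
      · exact ⟨P, 1, (h1.resolve_right h01.symm).symm, rfl⟩
    · have h0 : (none : SPt19) ∈ ({none, a, b} : Finset SPt19) := by simp
      rw [h] at h0
      simp at h0
  · rintro ⟨P, x, rfl, rfl⟩
    refine Or.inl ⟨P, ?_⟩
    obtain rfl | rfl : x = 0 ∨ x = 1 := by revert x; decide
    · rfl
    · rw [Finset.pair_comm]; rfl

theorem mem_STrip19_some {f : Finset AGPt → ZMod 2} {P Q R : AGPt} {x y z : ZMod 2} :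
    ({some (P, x), some (Q, y), some (R, z)} : Finset SPt19) ∈ STrip19 f ↔
      P ≠ Q ∧ P ≠ R ∧ Q ≠ R ∧ P + Q + R = 0 ∧ x + y + z = f {P, Q, R} := by
  constructor
  · rintro (⟨P', h⟩ | ⟨P', Q', R', x', y', z', h1, h2, h3, h4, h5, h⟩)
    · have h0 : (none : SPt19) ∈ ({none, some (P', 0), some (P', 1)} : Finset SPt19) := by simp
      rw [← h] at h0
      simp at h0
    · have e1 : some (P', x') ∈ ({some (P, x), some (Q, y), some (R, z)} : Finset SPt19) := by
        simp [h]
      have e2 : some (Q', y') ∈ ({some (P, x), some (Q, y), some (R, z)} : Finset SPt19) := by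
        simp [h]
      have e3 : some (R', z') ∈ ({some (P, x), some (Q, y), some (R, z)} : Finset SPt19) := by
        simp [h]
      simp only [Finset.mem_insert, Finset.mem_singleton, Option.some.injEq, Prod.mk.injEq]
        at e1 e2 e3
      have c1 : ∀ A B C : AGPt, ({A, C, B} : Finset AGPt) = {A, B, C} := fun A B C => by
        rw [Finset.pair_comm C B]
      have c2 : ∀ A B C : AGPt, ({B, A, C} : Finset AGPt) = {A, B, C} := fun A B C =>
        Finset.insert_comm _ _ _
      rcases e1 with ⟨rfl, rfl⟩ | ⟨rfl, rfl⟩ | ⟨rfl, rfl⟩ <;>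
      rcases e2 with ⟨rfl, rfl⟩ | ⟨rfl, rfl⟩ | ⟨rfl, rfl⟩ <;>
      first
      | exact absurd rfl h1
      | (rcases e3 with ⟨rfl, rfl⟩ | ⟨rfl, rfl⟩ | ⟨rfl, rfl⟩ <;>
         first
         | exact absurd rfl h2
         | exact absurd rfl h3
         | refine ⟨?_, ?_, ?_, ?_, ?_⟩) <;>
      first
      | assumption
      | exact Ne.symm ‹_›
      | (rw [← h4]; abel)
      | skip
      · rw [c1, ← h5]; ring
      · rw [c2, ← h5]; ring
      · rw [c2, c1, ← h5]; ring
      · rw [c1, c2, ← h5]; ring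
      · rw [c1, c2, c1, ← h5]; ring
  · rintro ⟨h1, h2, h3, h4, h5⟩
    exact Or.inr ⟨P, Q, R, x, y, z, h1, h2, h3, h4, h5, rfl⟩

theorem exists_eq_triple {α : Type u} [DecidableEq α] {t : Finset α} (ht : t.card = 3) {a b : α}
    (ha : a ∈ t) (hb : b ∈ t) (hab : a ≠ b) : ∃ c, c ≠ a ∧ c ≠ b ∧ t = {a, b, c} := by
  have h1 : ((t.erase a).erase b).card = 1 := by
    rw [Finset.card_erase_of_mem (Finset.mem_erase.2 ⟨hab.symm, hb⟩),
      Finset.card_erase_of_mem ha, ht]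
  obtain ⟨c, hc⟩ := Finset.card_eq_one.1 h1
  have hc' : c ∈ (t.erase a).erase b := by simp [hc]
  simp only [Finset.mem_erase] at hc'
  refine ⟨c, hc'.2.1, hc'.1, ?_⟩
  rw [← hc, Finset.insert_erase (Finset.mem_erase.2 ⟨hab.symm, hb⟩), Finset.insert_erase ha]

theorem isSTS_STrip19 (f : Finset AGPt → ZMod 2) : IsSTS (STrip19 f) := by
  have two : (1 : ZMod 2) + 1 = 0 := by decide
  have card : ∀ t ∈ STrip19 f, t.card = 3 := by
    rintro t (⟨P, rfl⟩ | ⟨P, Q, R, x, y, z, h1, h2, h3, -, -, rfl⟩)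
    · rw [Finset.card_eq_three]
      exact ⟨_, _, _, by simp, by simp, by simp, rfl⟩
    · rw [Finset.card_eq_three]
      exact ⟨_, _, _, by simp [h1], by simp [h2], by simp [h3], rfl⟩
  have uniq : ∀ {a b c c' : SPt19}, ({a, b, c} : Finset SPt19) ∈ STrip19 f →
      ({a, b, c'} : Finset SPt19) ∈ STrip19 f → c = c' := by
    intro a b c c' h h'
    rcases a with _ | ⟨P, x⟩
    · rw [mem_STrip19_none] at h h'
      grind
    rcases b with _ | ⟨Q, y⟩
    · rw [Finset.insert_comm, mem_STrip19_none] at h h'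
      grind
    have flip : ∀ u : SPt19, ({some (P, x), some (Q, y), u} : Finset SPt19) =
        {u, some (P, x), some (Q, y)} := fun u => by
      rw [Finset.pair_comm, Finset.insert_comm]
    rcases c with _ | ⟨R, z⟩ <;> rcases c' with _ | ⟨R', z'⟩
    · rfl
    · rw [flip, mem_STrip19_none] at h
      rw [mem_STrip19_some] at h'
      grind
    · rw [flip, mem_STrip19_none] at h'
      rw [mem_STrip19_some] at h
      grind
    · rw [mem_STrip19_some] at h h'
      obtain ⟨-, -, -, h1, h2⟩ := h
      obtain ⟨-, -, -, h1', h2'⟩ := h'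
      obtain rfl : R = R' := by
        rw [← h1'] at h1; exact add_left_cancel h1
      rw [← h2'] at h2
      rw [add_left_cancel h2]
  have exi : ∀ {a b : SPt19}, a ≠ b → ∃ c, ({a, b, c} : Finset SPt19) ∈ STrip19 f := by
    intro a b hab
    rcases a with _ | ⟨P, x⟩ <;> rcases b with _ | ⟨Q, y⟩
    · exact absurd rfl hab
    · exact ⟨some (Q, y + 1), mem_STrip19_none.2 ⟨Q, y, rfl, rfl⟩⟩
    · refine ⟨some (P, x + 1), ?_⟩
      rw [Finset.insert_comm]
      exact mem_STrip19_none.2 ⟨P, x, rfl, rfl⟩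
    · by_cases hPQ : P = Q
      · subst hPQ
        refine ⟨none, ?_⟩
        rw [Finset.pair_comm, Finset.insert_comm]
        refine mem_STrip19_none.2 ⟨P, x, rfl, ?_⟩
        have hxy : x ≠ y := fun h => hab (by rw [h])
        have : y = x + 1 := by clear hab; revert x y; decide
        rw [this]
      · exact ⟨some (-(P + Q), f {P, Q, -(P + Q)} - x - y), mem_STrip19_some.2
          ⟨hPQ, (ne_neg_add P Q hPQ).1, (ne_neg_add P Q hPQ).2, by abel, by ring⟩⟩
  refine ⟨card, fun a b hab => ?_⟩
  obtain ⟨c, hc⟩ := exi hab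
  refine ⟨_, ⟨hc, by simp, by simp⟩, ?_⟩
  rintro t ⟨ht, ha, hb⟩
  obtain ⟨c', -, -, rfl⟩ := exists_eq_triple (card t ht) ha hb hab
  rw [uniq hc ht]

/-- A bijection of Steiner triple systems that carries triples to triples is an isomorphism. -/
theorem STSIso.of_forall {α : Type u} {β : Type v} [DecidableEq α] [DecidableEq β]
    {T₁ : Set (Finset α)} {T₂ : Set (Finset β)} (h₁ : IsSTS T₁) (h₂ : IsSTS T₂) (e : α ≃ β)
    (h : ∀ t ∈ T₁, t.image (e : α → β) ∈ T₂) : STSIso T₁ T₂ := by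
  refine ⟨e, fun t => ⟨h t, fun ht => ?_⟩⟩
  have hc : 1 < t.card := by
    rw [← Finset.card_image_of_injective t e.injective, h₂.1 _ ht]; norm_num
  obtain ⟨a, ha, b, hb, hab⟩ := Finset.one_lt_card.1 hc
  obtain ⟨s, ⟨hs, has, hbs⟩, -⟩ := h₁.2 a b hab
  have := (h₂.2 (e a) (e b) (e.injective.ne hab)).unique
    ⟨ht, Finset.mem_image_of_mem _ ha, Finset.mem_image_of_mem _ hb⟩
    ⟨h s hs, Finset.mem_image_of_mem _ has, Finset.mem_image_of_mem _ hbs⟩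
  rwa [Finset.image_injective e.injective this]

theorem STSIso.symm {α : Type u} {β : Type v} [DecidableEq α] [DecidableEq β]
    {T₁ : Set (Finset α)} {T₂ : Set (Finset β)} (h : STSIso T₁ T₂) : STSIso T₂ T₁ := by
  obtain ⟨e, he⟩ := h
  refine ⟨e.symm, fun t => ?_⟩
  rw [he, Finset.image_image]
  simp

theorem STSIso.trans {α : Type u} {β : Type v} {γ : Type*} [DecidableEq β] [DecidableEq γ]
    {T₁ : Set (Finset α)} {T₂ : Set (Finset β)} {T₃ : Set (Finset γ)}
    (h : STSIso T₁ T₂) (h' : STSIso T₂ T₃) : STSIso T₁ T₃ := by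
  obtain ⟨e, he⟩ := h
  obtain ⟨e', he'⟩ := h'
  refine ⟨e.trans e', fun t => ?_⟩
  rw [he, he', Finset.image_image]
  rfl

theorem STSIso.isVeblen {α : Type u} {β : Type v} [DecidableEq α] [DecidableEq β]
    {T₁ : Set (Finset α)} {T₂ : Set (Finset β)} {e : α ≃ β}
    (he : ∀ t : Finset α, t ∈ T₁ ↔ t.image (e : α → β) ∈ T₂) {x : α} (hx : IsVeblen T₁ x) :
    IsVeblen T₂ (e x) := by
  have he' : ∀ a b c : β, ({a, b, c} : Finset β) ∈ T₂ ↔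
      ({e.symm a, e.symm b, e.symm c} : Finset α) ∈ T₁ := fun a b c => by
    rw [he]; simp [Finset.image_insert]
  intro a b c d t h1 h2 h3
  rw [he'] at *
  rw [e.symm_apply_apply] at h1 h2
  exact hx _ _ _ _ _ h1 h2 h3

theorem isVeblen_none_s15 (f : Finset AGPt → ZMod 2) : IsVeblen (STrip19 f) none := by
  intro a b c d t h1 h2 h3
  obtain ⟨P, x, rfl, rfl⟩ := mem_STrip19_none.1 h1
  obtain ⟨Q, y, rfl, rfl⟩ := mem_STrip19_none.1 h2
  have two : (1 : ZMod 2) + 1 = 0 := by decide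
  rcases t with _ | ⟨R, z⟩
  · rw [mem_STrip19_none] at *
    obtain ⟨P', x', h, h'⟩ := h3
    simp only [Option.some.injEq, Prod.mk.injEq] at h h'
    refine ⟨P, x + 1, rfl, ?_⟩
    rw [h.1, h'.1, h.2, h'.2]
  · rw [mem_STrip19_some] at *
    refine ⟨h3.1, h3.2.1, h3.2.2.1, h3.2.2.2.1, ?_⟩
    rw [← h3.2.2.2.2]
    linear_combination two

/-- The two affine lines through `P` with directions `(1,0)` and `(0,1)` violate the Veblen
condition already in `AG(2,3)`. -/
theorem not_isVeblen_some_s15 (f : Finset AGPt → ZMod 2) (p : AGPt × ZMod 2) :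
    ¬ IsVeblen (STrip19 f) (some p) := by
  obtain ⟨P, x⟩ := p
  intro h
  have line : ∀ (A B : AGPt) (y z : ZMod 2), A ≠ B → ∃ w : ZMod 2,
      ({some (A, y), some (B, z), some (-(A + B), w)} : Finset SPt19) ∈ STrip19 f := by
    intro A B y z hAB
    exact ⟨f {A, B, -(A + B)} - y - z, mem_STrip19_some.2
      ⟨hAB, (ne_neg_add A B hAB).1, (ne_neg_add A B hAB).2, by abel, by ring⟩⟩
  obtain ⟨w1, h1⟩ := line P (P + (1, 0)) x 0 (by simp [Prod.ext_iff])
  obtain ⟨w2, h2⟩ := line P (P + (0, 1)) x 0 (by simp [Prod.ext_iff])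
  obtain ⟨w3, h3⟩ := line (P + (1, 0)) (P + (0, 1)) 0 0 (by simp [Prod.ext_iff])
  have h3' : ({some (-(P + (1, 0) + (P + (0, 1))), w3), some (P + (1, 0), 0),
    some (P + (0, 1), 0)} : Finset SPt19) ∈ STrip19 f := by
    convert h3 using 1
    rw [Finset.insert_comm, Finset.pair_comm (some (_, w3))]
  have := (mem_STrip19_some.1 (h _ _ _ _ _ h1 h2 h3')).2.2.2.1
  revert this
  clear * -
  revert P; decide

/-! ### Parallel class sums and non-isomorphism -/

/-- The value of `f` on the line through `P` with direction `d`. -/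
def lineVal (f : Finset AGPt → ZMod 2) (P d : AGPt) : ZMod 2 := f {P, P + d, P - d}

/-- The sum of `f` over the parallel class of lines with direction `d`. Summing over all points
counts each of the three lines three times, which is harmless in `GF(2)`. -/
def classSum (f : Finset AGPt → ZMod 2) (d : AGPt) : ZMod 2 := ∑ P, lineVal f P d

/-- The number of nonzero directions whose parallel class has sum `1`. -/
def oddCount (f : Finset AGPt → ZMod 2) : ℕ :=
  (Finset.univ.filter fun d : AGPt => d ≠ 0 ∧ classSum f d = 1).card

/-- An isomorphism `S(f) ≅ S(g)` fixes the unique Veblen point, hence is given by a map `σ`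
of the plane carrying lines to lines together with a shift `c` of the second coordinates. -/
theorem exists_of_STSIso {f g : Finset AGPt → ZMod 2} (h : STSIso (STrip19 f) (STrip19 g)) :
    ∃ (σ : AGPt → AGPt) (c : AGPt → ZMod 2), ∀ P Q R : AGPt, P ≠ Q → P ≠ R → Q ≠ R →
      P + Q + R = 0 → σ P ≠ σ Q ∧ σ P + σ Q + σ R = 0 ∧
        f {P, Q, R} + c P + c Q + c R = g {σ P, σ Q, σ R} := by
  obtain ⟨e, he⟩ := h
  have hnone : e none = none := by
    rcases h0 : e none with _ | p
    · rfl
    · exact absurd (h0 ▸ STSIso.isVeblen he (isVeblen_none_s15 f)) (not_isVeblen_some_s15 g p)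
  have htr : ∀ a b c : SPt19, ({a, b, c} : Finset SPt19) ∈ STrip19 f →
      ({e a, e b, e c} : Finset SPt19) ∈ STrip19 g := fun a b c h => by
    simpa [Finset.image_insert] using (he _).1 h
  have hsome : ∀ P : AGPt, ∃ q : AGPt × ZMod 2, ∀ x, e (some (P, x)) = some (q.1, q.2 + x) := by
    intro P
    have h1 := htr none (some (P, 0)) (some (P, 1)) (mem_STrip19_none.2 ⟨P, 0, rfl, rfl⟩)
    rw [hnone, mem_STrip19_none] at h1
    obtain ⟨Q, y, h1, h2⟩ := h1
    refine ⟨(Q, y), fun x => ?_⟩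
    obtain rfl | rfl : x = 0 ∨ x = 1 := by revert x; decide
    · simpa using h1
    · exact h2
  choose q hq using hsome
  refine ⟨fun P => (q P).1, fun P => (q P).2, fun P Q R h1 h2 h3 h4 => ?_⟩
  have h5 := htr (some (P, 0)) (some (Q, 0)) (some (R, f {P, Q, R}))
    (mem_STrip19_some.2 ⟨h1, h2, h3, h4, by ring⟩)
  rw [hq, hq, hq, mem_STrip19_some] at h5
  refine ⟨h5.1, h5.2.2.2.1, ?_⟩
  rw [← h5.2.2.2.2]
  ring

/-- The map `σ` of `exists_of_STSIso` is affine, so its linear part `A` permutes the nonzero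
directions; summing over a parallel class shows that `classSum g ∘ A` is `classSum f` plus the
constant `∑ P, c P`. -/
theorem oddCount_of_STSIso {f g : Finset AGPt → ZMod 2} (h : STSIso (STrip19 f) (STrip19 g)) :
    oddCount f = oddCount g ∨ oddCount f + oddCount g = 8 := by
  obtain ⟨σ, c, H⟩ := exists_of_STSIso h
  have three : ∀ P : AGPt, P + P + P = 0 := by decide
  have hinj : Function.Injective σ := by
    intro P Q hPQ
    by_contra hne
    have h := ne_neg_add P Q hne
    exact (H P Q (-(P + Q)) hne h.1 h.2 (by abel)).1 hPQ
  have hsum : ∀ P Q R : AGPt, P + Q + R = 0 → σ P + σ Q + σ R = 0 := by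
    intro P Q R hs
    by_cases h1 : P = Q
    · subst h1
      obtain rfl : R = P := by
        have := three P
        rw [← hs] at this
        exact (add_left_cancel this).symm
      exact three _
    · exact (H P Q R h1 (by rintro rfl; revert P Q; decide)
        (by rintro rfl; revert P Q; decide) hs).2.1
  have haff : ∀ P d : AGPt, σ (P + d) = σ P + (σ d - σ 0) := by
    intro P d
    have h1 := hsum P d (-(P + d)) (by abel)
    have h2 := hsum 0 (-(P + d)) (P + d) (by abel)
    linear_combination h2 - h1
  let A : AGPt → AGPt := fun d => σ d - σ 0
  have hA : Function.Injective A := fun d d' h => hinj (sub_left_injective h)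
  have hA0 : ∀ d, A d ≠ 0 ↔ d ≠ 0 := fun d => by
    have : A 0 = 0 := sub_self _
    rw [← hA.ne_iff (x := d) (y := 0), this]
  have hbij : Function.Bijective σ := Finite.injective_iff_bijective.1 hinj
  have hAbij : Function.Bijective A := Finite.injective_iff_bijective.1 hA
  have hcs : ∀ d : AGPt, d ≠ 0 → classSum f d + ∑ P, c P = classSum g (A d) := by
    intro d hd
    have hl : ∀ P, lineVal f P d + c P + c (P + d) + c (P - d) = lineVal g (σ P) (A d) := by
      intro P
      have h1 := (H P (P + d) (P - d) (by simpa using hd)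
        (by simpa [sub_eq_add_neg] using hd) ?_ ?_).2.2
      · rw [lineVal, lineVal, h1]
        have e1 := haff P d
        have e2 : σ (P - d) = σ P - A d := by
          have := haff (P - d) d
          rw [sub_add_cancel] at this
          rw [this]; simp [A]
        rw [e1, e2]
      · clear * - hd; revert P d; decide
      · clear * -; revert P d; decide
    have h2 : ∑ P, lineVal g (σ P) (A d) = classSum g (A d) :=
      hbij.sum_comp fun P => lineVal g P (A d)
    rw [← h2, ← Finset.sum_congr rfl fun P _ => hl P]
    simp only [Finset.sum_add_distrib]
    have h3 : ∑ P, c (P + d) = ∑ P, c P := Equiv.sum_comp (Equiv.addRight d) c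
    have h4 : ∑ P, c (P - d) = ∑ P, c P := Equiv.sum_comp (Equiv.subRight d) c
    rw [h3, h4, classSum]
    have two : (2 : ZMod 2) = 0 := by decide
    linear_combination -(∑ P, c P) * two
  have hcount : ∀ r : ZMod 2,
      (Finset.univ.filter fun d : AGPt => d ≠ 0 ∧ classSum g (A d) = r).card =
      (Finset.univ.filter fun d : AGPt => d ≠ 0 ∧ classSum g d = r).card := by
    intro r
    refine Finset.card_bij (fun d _ => A d) ?_ (fun _ _ _ _ h => hA h) ?_
    · intro d hd
      simpa [hA0] using hd
    · intro d hd
      obtain ⟨d, rfl⟩ := hAbij.2 d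
      exact ⟨d, by simpa [hA0] using hd, rfl⟩
  obtain hC | hC : ∑ P, c P = 0 ∨ ∑ P, c P = 1 := by
    generalize ∑ P, c P = x; revert x; decide
  · left
    rw [oddCount, oddCount, ← hcount]
    congr 1
    ext d
    simp only [Finset.mem_filter, Finset.mem_univ, true_and]
    refine and_congr_right fun hd => ?_
    rw [← hcs d hd, hC, add_zero]
  · right
    rw [oddCount, oddCount, ← hcount, ← Finset.card_union_of_disjoint]
    · have : (Finset.univ.filter fun d : AGPt => d ≠ 0).card = 8 := by decide
      rw [← this]
      congr 1
      ext d
      simp only [Finset.mem_filter, Finset.mem_univ, true_and, Finset.mem_union]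
      by_cases hd : d = 0
      · simp [hd]
      · rw [← hcs d hd, hC]
        have : ∀ a : ZMod 2, a = 1 ∨ a + 1 = 1 := by decide
        simp only [ne_eq, hd, not_false_eq_true, true_and, iff_true]
        exact this _
    · rw [Finset.disjoint_filter]
      rintro d - ⟨hd, h1⟩ ⟨-, h2⟩
      rw [← hcs d hd, hC, h1] at h2
      revert h2; decide

theorem classSum_agf0 (d : AGPt) : classSum agf0 d = 0 := by simp [classSum, lineVal, agf0]

theorem classSum_agf1 : ∀ d : AGPt, d ≠ 0 → classSum agf1 d = if d.1 = 0 then 1 else 0 := by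
  decide +kernel

theorem classSum_agf2 : ∀ d : AGPt, d ≠ 0 →
    classSum agf2 d = if d.1 = 0 ∨ d.2 = 0 then 1 else 0 := by
  decide +kernel

theorem oddCount_agf0 : oddCount agf0 = 0 := by decide +kernel
theorem oddCount_agf1 : oddCount agf1 = 2 := by decide +kernel
theorem oddCount_agf2 : oddCount agf2 = 4 := by decide +kernel

/-! ### Reduction of `f` to its parallel class sums -/

/-- Representatives of the four directions of `AG(2,3)`. -/
def dir : Fin 4 → AGPt := ![(0, 1), (1, 0), (1, 1), (1, 2)]

/-- The linear form vanishing on `dir i`; its level sets are the lines of the `i`-th class. -/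
def form (i : Fin 4) (P : AGPt) : ZMod 3 := P.1 * (dir i).2 - P.2 * (dir i).1

/-- The sum of `f` over the four lines through `P`. -/
def pointSum (f : Finset AGPt → ZMod 2) (P : AGPt) : ZMod 2 := ∑ i, lineVal f P (dir i)

theorem exists_dir : ∀ d : AGPt, d ≠ 0 → ∃ i, d = dir i ∨ d = -dir i := by decide

theorem lineVal_neg (f : Finset AGPt → ZMod 2) (P d : AGPt) : lineVal f P (-d) = lineVal f P d := by
  rw [lineVal, lineVal, sub_neg_eq_add, ← sub_eq_add_neg, Finset.pair_comm]

theorem classSum_neg (f : Finset AGPt → ZMod 2) (d : AGPt) : classSum f (-d) = classSum f d := by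
  simp only [classSum, lineVal_neg]

theorem exists_lineVal_eq (f : Finset AGPt → ZMod 2) (i : Fin 4) :
    ∃ G : ZMod 3 → ZMod 2, ∀ P, lineVal f P (dir i) = G (form i P) := by
  have h : ∀ i : Fin 4, ∀ P Q : AGPt, form i P = form i Q →
      ({P, P + dir i, P - dir i} : Finset AGPt) = {Q, Q + dir i, Q - dir i} := by
    decide +kernel
  have hs : Function.Surjective (form i) := by revert i; decide
  choose r hr using hs
  exact ⟨fun k => lineVal f (r k) (dir i), fun P => congrArg f (h i _ _ (hr _).symm)⟩

/-- A line with direction `dir i` meets each line of the `j`-th parallel class exactly once. -/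
theorem sum_transversal (f : Finset AGPt → ZMod 2) {i j : Fin 4} (hij : i ≠ j) (P : AGPt) :
    lineVal f P (dir j) + lineVal f (P + dir i) (dir j) + lineVal f (P - dir i) (dir j) =
      classSum f (dir j) := by
  obtain ⟨G, hG⟩ := exists_lineVal_eq f j
  have h1 : ∀ i j : Fin 4, i ≠ j → form j (dir i) ≠ 0 := by decide
  have h2 : ∀ G : ZMod 3 → ZMod 2, ∀ a b : ZMod 3, b ≠ 0 →
      G a + G (a + b) + G (a - b) = G 0 + G 1 + G 2 := by
    intro G a b hb
    have h012 : ∀ a b : ZMod 3, b ≠ 0 → ({a, a + b, a - b} : Finset (ZMod 3)) = {0, 1, 2} := by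
      decide
    have hd : ∀ a b : ZMod 3, b ≠ 0 →
        a ∉ ({a + b, a - b} : Finset (ZMod 3)) ∧ a + b ≠ a - b := by
      decide
    have hs := congrArg (fun s => ∑ k ∈ s, G k) (h012 a b hb)
    rw [Finset.sum_insert (hd a b hb).1, Finset.sum_pair (hd a b hb).2,
      Finset.sum_insert (by decide), Finset.sum_pair (by decide)] at hs
    rw [add_assoc, hs, add_assoc]
  have h3 : ∀ j : Fin 4, ∀ G : ZMod 3 → ZMod 2, ∑ P, G (form j P) = G 0 + G 1 + G 2 := by
    intro j G
    have hf : ∀ j : Fin 4, ∀ k, (Finset.univ.filter fun P : AGPt => form j P = k).card = 3 := by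
      decide
    rw [← Finset.sum_fiberwise (s := Finset.univ) (g := form j)]
    have : ∀ k, ∑ P with form j P = k, G (form j P) = G k := by
      intro k
      rw [Finset.sum_congr rfl (g := fun _ => G k) (fun P hP => by rw [(Finset.mem_filter.1 hP).2]),
        Finset.sum_const, hf]
      generalize G k = x; revert x; decide
    simp only [this]
    exact Fin.sum_univ_three G
  have hadd : form j (P + dir i) = form j P + form j (dir i) := by simp [form]; ring
  have hsub : form j (P - dir i) = form j P - form j (dir i) := by simp [form]; ring
  simp only [classSum, hG]
  rw [hadd, hsub, h2 _ _ _ (h1 i j hij), h3]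

/-- Up to the coboundary of `pointSum f`, the value of `f` on a line is the sum of `f` over the
parallel class of that line plus the sum of all values of `f`. In the sum of `pointSum f` over the
points of a line `L`, `L` itself is counted three times and every line not parallel to `L` once. -/
theorem lineVal_add_pointSum (f : Finset AGPt → ZMod 2) (P d : AGPt) (hd : d ≠ 0) :
    lineVal f P d + (pointSum f P + pointSum f (P + d) + pointSum f (P - d)) =
      ∑ i, classSum f (dir i) + classSum f d := by
  have main : ∀ i, lineVal f P (dir i) +
      (pointSum f P + pointSum f (P + dir i) + pointSum f (P - dir i)) =
      ∑ i, classSum f (dir i) + classSum f (dir i) := by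
    intro i
    have hadd : lineVal f (P + dir i) (dir i) = lineVal f P (dir i) := by
      have : ∀ i : Fin 4, ∀ P, ({P + dir i, P + dir i + dir i, P + dir i - dir i} : Finset AGPt) =
        {P, P + dir i, P - dir i} := by decide +kernel
      rw [lineVal, lineVal, this]
    have hsub : lineVal f (P - dir i) (dir i) = lineVal f P (dir i) := by
      have : ∀ i : Fin 4, ∀ P, ({P - dir i, P - dir i + dir i, P - dir i - dir i} : Finset AGPt) =
        {P, P + dir i, P - dir i} := by decide +kernel
      rw [lineVal, lineVal, this]
    simp only [pointSum]
    rw [← Finset.sum_add_distrib, ← Finset.sum_add_distrib,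
      ← Finset.add_sum_erase _ _ (Finset.mem_univ i), hadd, hsub,
      ← Finset.add_sum_erase _ (fun i => classSum f (dir i)) (Finset.mem_univ i),
      Finset.sum_congr rfl (fun j hj => sum_transversal f (Finset.ne_of_mem_erase hj).symm P)]
    have two : (2 : ZMod 2) = 0 := by decide
    linear_combination (2 * lineVal f P (dir i) - classSum f (dir i)) * two
  obtain ⟨i, rfl | rfl⟩ := exists_dir d hd
  · exact main i
  · have h := main i
    rw [lineVal_neg, classSum_neg, ← h, sub_neg_eq_add, ← sub_eq_add_neg]
    ring

/-- `S(f)` and `S(g)` are isomorphic as soon as the class sums of `f` and `g` agree up to a linear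
bijection and a constant. -/
theorem STSIso_of_classSum {f g : Finset AGPt → ZMod 2} (A : AGPt ≃+ AGPt) (C : ZMod 2)
    (h : ∀ d, d ≠ 0 → classSum f d + C = classSum g (A d)) :
    STSIso (STrip19 f) (STrip19 g) := by
  have two : (2 : ZMod 2) = 0 := by decide
  obtain ⟨K, hK⟩ : ∃ K, K = ∑ i, classSum f (dir i) + ∑ i, classSum g (dir i) + C := ⟨_, rfl⟩
  let c : AGPt → ZMod 2 := fun P => pointSum f P + pointSum g (A P) + K
  have hc : ∀ P Q R : AGPt, P ≠ Q → P + Q + R = 0 →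
      f {P, Q, R} + c P + c Q + c R = g {A P, A Q, A R} := by
    intro P Q R hPQ hs
    obtain ⟨d, rfl⟩ : ∃ d, Q = P + d := ⟨Q - P, by abel⟩
    have hd : d ≠ 0 := by simpa using hPQ
    obtain rfl : R = P - d := by
      have : ∀ P d R : AGPt, P + (P + d) + R = 0 → R = P - d := by decide +kernel
      exact this _ _ _ hs
    have h1 := lineVal_add_pointSum f P d hd
    have h2 := lineVal_add_pointSum g (A P) (A d) (by simpa using hd)
    rw [← h d hd] at h2
    simp only [lineVal] at h1 h2
    simp only [map_add, map_sub, c]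
    rw [hK]
    linear_combination h1 + h2 + two * (2 * (∑ i, classSum f (dir i)) +
      2 * (∑ i, classSum g (dir i)) + 2 * C + classSum f d - g {A P, A P + A d, A P - A d})
  let E : AGPt × ZMod 2 ≃ AGPt × ZMod 2 :=
    { toFun := fun p => (A p.1, p.2 + c p.1)
      invFun := fun p => (A.symm p.1, p.2 - c (A.symm p.1))
      left_inv := fun p => by simp
      right_inv := fun p => by simp }
  refine STSIso.of_forall (isSTS_STrip19 f) (isSTS_STrip19 g) (Equiv.optionCongr E) ?_
  rintro t (⟨P, rfl⟩ | ⟨P, Q, R, x, y, z, h1, h2, h3, h4, h5, rfl⟩)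
  · simp only [Finset.image_insert, Finset.image_singleton, Equiv.optionCongr_apply,
      Option.map_none, Option.map_some]
    exact mem_STrip19_none.2 ⟨A P, 0 + c P, rfl, by simp [E, add_comm]⟩
  · simp only [Finset.image_insert, Finset.image_singleton, Equiv.optionCongr_apply,
      Option.map_some]
    refine mem_STrip19_some.2 ⟨by simpa using h1, by simpa using h2, by simpa using h3, ?_, ?_⟩
    · rw [← map_add, ← map_add, h4, map_zero]
    · rw [← hc P Q R h1 h4, ← h5]; ring

/-- The linear map of the plane sending the standard basis to `v`, `w`. -/
def lin (v w d : AGPt) : AGPt := (d.1 * v.1 + d.2 * w.1, d.1 * v.2 + d.2 * w.2)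

/-- The map `lin v w` as an additive bijection, when `v`, `w` are independent. -/
noncomputable def linEquiv (v w : AGPt)
    (h : ∀ d : AGPt, lin v w d = 0 → d = 0) :
    AGPt ≃+ AGPt :=
  AddEquiv.ofBijective
    (AddMonoidHom.mk' (lin v w)
      (fun a b => by ext <;> simp [lin] <;> ring))
    (Finite.injective_iff_bijective.1 ((injective_iff_map_eq_zero _).2 h))

/-- Modulo constants and the symmetric group on the four directions (all of whose elements are
induced by linear maps), a vector of four class sums in `GF(2)` has weight 0, 1 or 2. -/
theorem STSIso_normal_form (f : Finset AGPt → ZMod 2) :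
    STSIso (STrip19 f) (STrip19 agf0) ∨ STSIso (STrip19 f) (STrip19 agf1) ∨
      STSIso (STrip19 f) (STrip19 agf2) := by
  have red : ∀ (g : Finset AGPt → ZMod 2) (v w : AGPt) (C : ZMod 2),
      (∀ d : AGPt, lin v w d = 0 → d = 0) →
      (∀ i, classSum f (dir i) + C = classSum g (lin v w (dir i))) →
      STSIso (STrip19 f) (STrip19 g) := by
    intro g v w C h1 h2
    refine STSIso_of_classSum (linEquiv v w h1) C fun d hd => ?_
    obtain ⟨i, rfl | rfl⟩ := exists_dir d hd
    · exact h2 i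
    · rw [map_neg, classSum_neg, classSum_neg]
      exact h2 i
  have table : ∀ s₀ s₁ s₂ s₃ : ZMod 2, ∃ (v w : AGPt) (C : ZMod 2),
      (∀ d : AGPt, lin v w d = 0 → d = 0) ∧
      ((∀ i, ![s₀, s₁, s₂, s₃] i + C = 0) ∨
       (∀ i, ![s₀, s₁, s₂, s₃] i + C = if (lin v w (dir i)).1 = 0 then 1 else 0) ∨
       (∀ i, ![s₀, s₁, s₂, s₃] i + C =
          if (lin v w (dir i)).1 = 0 ∨ (lin v w (dir i)).2 = 0 then 1 else 0)) := by
    decide +kernel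
  obtain ⟨v, w, C, hinj, hcases⟩ := table (classSum f (dir 0)) (classSum f (dir 1))
    (classSum f (dir 2)) (classSum f (dir 3))
  have hdir : ∀ i, dir i ≠ 0 := by decide
  have hne : ∀ i, lin v w (dir i) ≠ 0 := fun i h => hdir i (hinj _ h)
  have hs : ∀ i, ![classSum f (dir 0), classSum f (dir 1), classSum f (dir 2),
      classSum f (dir 3)] i = classSum f (dir i) := by
    intro i; fin_cases i <;> rfl
  simp only [hs] at hcases
  rcases hcases with h | h | h
  · exact Or.inl (red _ v w C hinj fun i => by rw [h, classSum_agf0])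
  · exact Or.inr (Or.inl (red _ v w C hinj fun i => by rw [h, classSum_agf1 _ (hne i)]))
  · exact Or.inr (Or.inr (red _ v w C hinj fun i => by rw [h, classSum_agf2 _ (hne i)]))

/-! ### Systems with a Veblen point are of the form `S(f)` -/

/-- A Steiner triple system is the same as a Steiner quasigroup: `m a b` is the third point of the
triple through `a ≠ b`, and `m a a = a`. -/
theorem exists_op {α : Type u} [DecidableEq α] {T : Set (Finset α)} (hT : IsSTS T) :
    ∃ m : α → α → α, (∀ a, m a a = a) ∧ (∀ a b, m a b = m b a) ∧ (∀ a b, m a (m a b) = b) ∧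
      ∀ a b c, ({a, b, c} : Finset α) ∈ T ↔ a ≠ b ∧ c = m a b := by
  have hex : ∀ a b : α, ∃ c, (a = b → c = a) ∧
      (a ≠ b → c ≠ a ∧ c ≠ b ∧ ({a, b, c} : Finset α) ∈ T) := by
    intro a b
    by_cases hab : a = b
    · exact ⟨a, fun _ => rfl, fun h => absurd hab h⟩
    · obtain ⟨t, ⟨ht, ha, hb⟩, -⟩ := hT.2 a b hab
      obtain ⟨c, h1, h2, rfl⟩ := exists_eq_triple (hT.1 t ht) ha hb hab
      exact ⟨c, fun h => absurd h hab, fun _ => ⟨h1, h2, ht⟩⟩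
  choose m hm1 hm2 using hex
  have hne : ∀ {a b c : α}, ({a, b, c} : Finset α) ∈ T → a ≠ b ∧ a ≠ c ∧ b ≠ c := by
    intro a b c h
    have h3 := hT.1 _ h
    refine ⟨?_, ?_, ?_⟩
    · rintro rfl
      rw [Finset.insert_idem] at h3
      have := Finset.card_le_two (a := a) (b := c)
      omega
    · rintro rfl
      rw [Finset.pair_comm, Finset.insert_idem] at h3
      have := Finset.card_le_two (a := a) (b := b)
      omega
    · rintro rfl
      rw [Finset.pair_eq_singleton] at h3
      have := Finset.card_le_two (a := a) (b := b)
      omega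
  have uniq : ∀ {a b c c' : α}, ({a, b, c} : Finset α) ∈ T → ({a, b, c'} : Finset α) ∈ T →
      c = c' := by
    intro a b c c' h h'
    have h1 := (hT.2 a b (hne h).1).unique ⟨h, by simp, by simp⟩ ⟨h', by simp, by simp⟩
    have h2 : c ∈ ({a, b, c'} : Finset α) := by rw [← h1]; simp
    simp only [Finset.mem_insert, Finset.mem_singleton] at h2
    rcases h2 with h2 | h2 | h2
    · exact absurd h2.symm (hne h).2.1
    · exact absurd h2.symm (hne h).2.2
    · exact h2
  have hmem : ∀ a b c, ({a, b, c} : Finset α) ∈ T ↔ a ≠ b ∧ c = m a b := fun a b c =>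
    ⟨fun h => ⟨(hne h).1, uniq h (hm2 a b (hne h).1).2.2⟩, fun h => h.2 ▸ (hm2 a b h.1).2.2⟩
  refine ⟨m, fun a => hm1 a a rfl, fun a b => ?_, fun a b => ?_, hmem⟩
  · by_cases hab : a = b
    · rw [hab]
    · have h1 := (hm2 a b hab).2.2
      rw [Finset.insert_comm] at h1
      exact ((hmem _ _ _).1 h1).2
  · by_cases hab : a = b
    · rw [hm1 a b hab, hm1 a a rfl, hab]
    · have h1 := (hm2 a b hab).2.2
      rw [Finset.pair_comm] at h1
      exact (((hmem _ _ _).1 h1).2).symm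

/-- A Steiner triple system of order 19 with a Veblen point `x` is some `S(f)`: the quotient by
the involution `a ↦ m x a` is a Steiner triple system of order 9, hence `AG(2,3)`, and `f` records
whether three chosen representatives over a line form a triple. -/
theorem exists_STSIso_STrip19 {α : Type u} [DecidableEq α] [Fintype α] {T : Set (Finset α)}
    (hcard : Fintype.card α = 19) (hT : IsSTS T) {x : α} (hx : IsVeblen T x) :
    ∃ f, STSIso T (STrip19 f) := by
  classical
  obtain ⟨m, idem, comm, inv, hmem⟩ := exists_op hT
  have ne : ∀ {a b : α}, a ≠ b → m a b ≠ a := fun h => op_ne_left m idem inv h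
  have ne' : ∀ {a b : α}, a ≠ b → m a b ≠ b := fun {a b} h => by rw [comm]; exact ne h.symm
  -- The Veblen condition makes the involution `m x` commute with products of points that lie on
  -- distinct triples through `x`.
  have veb : ∀ {a b : α}, a ≠ x → b ≠ x → a ≠ b → m x a ≠ b → m (m x a) b = m x (m a b) := by
    intro a b ha hb hab hxab
    have hab' : m a b ≠ x := fun h => hxab (by rw [comm, ← h, inv])
    have h1 := (hmem x (m a b) _).2 ⟨hab'.symm, rfl⟩
    have h2 := (hmem x a _).2 ⟨ha.symm, rfl⟩
    have h3 : ({b, m a b, a} : Finset α) ∈ T := by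
      refine (hmem _ _ _).2 ⟨(ne' hab).symm, ?_⟩
      rw [comm a b, inv]
    have h4 := hx _ _ _ _ _ h1 h2 h3
    rw [Finset.pair_comm] at h4
    rw [comm]
    exact (((hmem _ _ _).1 h4).2).symm
  let S : Setoid {a : α // a ≠ x} :=
    { r := fun a b => a.1 = b.1 ∨ m x a.1 = b.1
      iseqv :=
        { refl := fun a => Or.inl rfl
          symm := by
            rintro a b (h | h)
            · exact Or.inl h.symm
            · exact Or.inr (by rw [← h, inv])
          trans := by
            rintro a b c (h | h) (h' | h')
            · exact Or.inl (h.trans h')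
            · exact Or.inr (by rw [h, h'])
            · exact Or.inr (by rw [h, h'])
            · exact Or.inl (by rw [← h', ← h, inv]) } }
  let β := Quotient S
  let r : β → α := fun u => u.out.1
  have hr : ∀ u, r u ≠ x := fun u => u.out.2
  -- `GF(2)` acts on the points other than `x` with the classes of `S` as orbits.
  let fl : ZMod 2 → α → α := fun y a => if y = 0 then a else m x a
  have fl0 : ∀ a, fl 0 a = a := fun a => rfl
  have fl1 : ∀ a, fl 1 a = m x a := fun a => rfl
  have z2 : ∀ y : ZMod 2, y = 0 ∨ y = 1 := by decide
  have fladd : ∀ y z a, fl y (fl z a) = fl (y + z) a := by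
    intro y z a
    have : (1 : ZMod 2) + 1 = 0 := by decide
    rcases z2 y with rfl | rfl <;> rcases z2 z with rfl | rfl <;>
      simp only [fl0, fl1, add_zero, zero_add, inv, this]
  have hproj : ∀ a, a ≠ x → ∃ u y, a = fl y (r u) := by
    intro a ha
    have h : S.r (Quotient.mk S ⟨a, ha⟩).out ⟨a, ha⟩ := Quotient.mk_out (s := S) ⟨a, ha⟩
    rcases h with h | h
    · exact ⟨_, 0, h.symm⟩
    · exact ⟨_, 1, h.symm⟩
  have flne : ∀ y a, a ≠ x → fl y a ≠ x := by
    intro y a ha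
    rcases z2 y with rfl | rfl
    · exact ha
    · exact ne ha.symm
  have rinj : ∀ u v y, r u = fl y (r v) → u = v := by
    intro u v y h
    rw [← Quotient.out_eq u, ← Quotient.out_eq v]
    refine Quotient.sound (s := S) ?_
    rcases z2 y with rfl | rfl
    · exact Or.inl h
    · exact S.symm (Or.inr h.symm)
  have flinj : ∀ {u v y z}, fl y (r u) = fl z (r v) → u = v ∧ y = z := by
    intro u v y z h
    have h1 : r u = fl (y + z) (r v) := by
      have := congrArg (fl y) h
      rw [fladd, fladd, CharTwo.add_self_eq_zero, fl0] at this
      exact this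
    obtain rfl := rinj _ _ _ h1
    refine ⟨rfl, ?_⟩
    rcases z2 (y + z) with h2 | h2
    · exact (CharTwo.add_eq_zero).1 h2
    · rw [h2, fl1] at h1
      exact absurd h1.symm (ne' (hr u).symm)
  have flop : ∀ {u v : β} (y z : ZMod 2), u ≠ v →
      m (fl y (r u)) (fl z (r v)) = fl (y + z) (m (r u) (r v)) := by
    have step : ∀ {u v : β} (y z : ZMod 2), u ≠ v →
        m (fl y (r u)) (fl z (r v)) = fl y (m (r u) (fl z (r v))) := by
      intro u v y z huv
      rcases z2 y with rfl | rfl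
      · rfl
      · exact veb (hr u) (flne _ _ (hr v)) (fun h => huv (flinj (y := 0) h).1)
          (fun h => huv (flinj (y := 1) h).1)
    intro u v y z huv
    have h := step z 0 huv.symm
    rw [fl0, comm, comm (r v)] at h
    rw [step y z huv, h, fladd]
  let e₀ : Option (β × ZMod 2) → α := fun o => o.elim x fun p => fl p.2 (r p.1)
  have he₀ : Function.Bijective e₀ := by
    constructor
    · rintro (_ | ⟨u, y⟩) (_ | ⟨v, z⟩) h
      · rfl
      · exact absurd h.symm (flne _ _ (hr v))
      · exact absurd h (flne _ _ (hr u))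
      · obtain ⟨rfl, rfl⟩ := flinj h
        rfl
    · intro a
      by_cases ha : a = x
      · exact ⟨none, ha.symm⟩
      · obtain ⟨u, y, rfl⟩ := hproj a ha
        exact ⟨some (u, y), rfl⟩
  have hβ : Fintype.card β = 9 := by
    have := Fintype.card_of_bijective he₀
    rw [hcard, Fintype.card_option, Fintype.card_prod, ZMod.card] at this
    omega
  have hthird : ∀ u v : β, ∃ w, (u = v → w = u) ∧ (u ≠ v → ∃ y, m (r u) (r v) = fl y (r w)) := by
    intro u v
    by_cases huv : u = v
    · exact ⟨u, fun _ => rfl, fun h => absurd huv h⟩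
    · have h1 : m (r u) (r v) ≠ x := fun h => huv (rinj u v 1 (by
        rw [fl1, ← h, comm (r u), comm _ (r v), inv]))
      obtain ⟨w, y, h⟩ := hproj _ h1
      exact ⟨w, fun h => absurd h huv, fun _ => ⟨y, h⟩⟩
  choose n hn1 hn2 using hthird
  have nuniq : ∀ {u v w y}, u ≠ v → m (r u) (r v) = fl y (r w) → n u v = w := by
    intro u v w y huv h
    obtain ⟨z, hz⟩ := hn2 u v huv
    exact (flinj (hz.symm.trans h)).1
  obtain ⟨φ, hφ⟩ := exists_affine_coordinates n hβ (fun u => hn1 u u rfl)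
    (fun u v => by
      by_cases huv : u = v
      · rw [huv]
      · obtain ⟨z, hz⟩ := hn2 v u (Ne.symm huv)
        exact nuniq huv (by rw [comm, hz]))
    (fun u v => by
      by_cases huv : u = v
      · rw [hn1 u v huv, hn1 u u rfl, huv]
      · obtain ⟨z, hz⟩ := hn2 u v huv
        have hne : u ≠ n u v := by
          intro h
          rw [← h] at hz
          rcases z2 z with rfl | rfl
          · exact ne (fun h => huv (rinj u v 0 h)) hz
          · rw [fl1, comm x] at hz
            refine hr v ?_
            rw [← inv (r u) (r v), hz, inv]
        refine nuniq (y := z) hne ?_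
        have h1 := flop (u := u) (v := n u v) 0 z hne
        rw [fl0, ← hz, inv, zero_add] at h1
        rw [h1, fladd, CharTwo.add_self_eq_zero, fl0])
  let f : Finset AGPt → ZMod 2 := fun L => if L.image (fun P => r (φ P)) ∈ T then 0 else 1
  refine ⟨f, STSIso.symm (STSIso.of_forall (isSTS_STrip19 f) hT
    ((Equiv.optionCongr (Equiv.prodCongr φ (Equiv.refl (ZMod 2)))).trans
      (Equiv.ofBijective e₀ he₀)) ?_)⟩
  rintro t (⟨P, rfl⟩ | ⟨P, Q, R, y, z, w, h1, h2, h3, h4, h5, rfl⟩)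
  · simp only [Finset.image_insert, Finset.image_singleton]
    exact (hmem _ _ _).2 ⟨(hr _).symm, rfl⟩
  · simp only [Finset.image_insert, Finset.image_singleton]
    change ({fl y (r (φ P)), fl z (r (φ Q)), fl w (r (φ R))} : Finset α) ∈ T
    have hPQ : φ P ≠ φ Q := φ.injective.ne h1
    have hR : n (φ P) (φ Q) = φ R := by
      rw [hφ]
      congr 1
      exact (eq_neg_of_add_eq_zero_right h4).symm
    obtain ⟨k, hk⟩ := hn2 _ _ hPQ
    rw [hR] at hk
    have hf : f {P, Q, R} = k := by
      simp only [f, Finset.image_insert, Finset.image_singleton, hmem, hk]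
      have h0 : r (φ P) ≠ r (φ Q) := fun h => hPQ (rinj _ _ 0 h)
      rcases z2 k with rfl | rfl
      · simp [h0, fl0]
      · have h01 : r (φ R) ≠ fl 1 (r (φ R)) := (ne' (hr _).symm).symm
        simp [h01]
    refine (hmem _ _ _).2 ⟨fun h => hPQ (flinj h).1, ?_⟩
    rw [flop _ _ hPQ, hk, fladd]
    congr 1
    rw [← hf, ← h5]
    have two : (2 : ZMod 2) = 0 := by decide
    linear_combination -(y + z) * two

/-! ### The classification -/

/-- The three Steiner triple systems `S(f0)`, `S(f1)`, `S(f2)` of order 19 are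
pairwise non-isomorphic, and every Steiner triple system of order 19 with
exactly one Veblen point is isomorphic to one of them. -/
theorem sts19_one_veblen_classification :
    (¬ STSIso (STrip19 agf0) (STrip19 agf1) ∧
     ¬ STSIso (STrip19 agf0) (STrip19 agf2) ∧
     ¬ STSIso (STrip19 agf1) (STrip19 agf2)) ∧
    ∀ (α : Type u) [DecidableEq α] [Fintype α] (T : Set (Finset α)),
      Fintype.card α = 19 → IsSTS T → (∃! x : α, IsVeblen T x) →
      STSIso T (STrip19 agf0) ∨ STSIso T (STrip19 agf1) ∨ STSIso T (STrip19 agf2) := by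
  refine ⟨⟨fun h => ?_, fun h => ?_, fun h => ?_⟩, ?_⟩
  · simpa [oddCount_agf0, oddCount_agf1] using oddCount_of_STSIso h
  · simpa [oddCount_agf0, oddCount_agf2] using oddCount_of_STSIso h
  · simpa [oddCount_agf1, oddCount_agf2] using oddCount_of_STSIso h
  · rintro α _ _ T hcard hT ⟨x, hx, -⟩
    obtain ⟨f, hf⟩ := exists_STSIso_STrip19 hcard hT hx
    exact (STSIso_normal_form f).imp hf.trans (Or.imp hf.trans hf.trans)
end

section
/- Let f1: GF(2)^3 × GF(2)^3 → GF(2)^2 be the symmetric function defined by f1(P,Q) = (0,1) if P and Q are distinct nonzero vectors with {P,Q,P+Q} = {(0,1,1),(1,0,1),(1,1,0)}, and f1(P,Q) = (0,0) otherwise. Then the incidence structure S(f1) is a Steiner triple system of order 31 whose Veblen points are exactly the three points (0,a) with a a nonzero vector of GF(2)^2. -/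
/-!
On all of `V3 × V2` put the product `u * w = (u₁ + w₁, u₂ + w₂ + f1 (u₁, w₁))` (`vmul` below).
Since `f1` is symmetric, vanishes when an argument is zero or the arguments agree, and is constant
on the pairs of a line `{P, Q, P + Q}`, three points form a triple of `S(f1)` exactly when the first
two are distinct and the third is their product (`mem_triples_iff`). This gives the Steiner property
at once.

Multiplying by a point `(0, a)` is just addition of `(0, a)`, and this does not change the
first coordinates on which `f1` depends; hence `(0, a)` is a Veblen point. For a point `(P, x)` with
`P ≠ 0` the Veblen condition for `(A, 0)` and `(C, 0)` forces
`f1 (P, A) + f1 (P, C) + f1 (A, C) + f1 (P + A, P + C) = 0`. There are always `A` and `C` for which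
exactly one of these four values is nonzero: if `P` is on the distinguished line take `A` on it and
`C` off it, and otherwise take `A` and `C` on it (`exists_vf1_obstruction`).
-/

universe u v

open scoped Classical

/-- `GF(2)^3`. -/
abbrev V3 : Type := Fin 3 → ZMod 2

/-- `GF(2)^2`. -/
abbrev V2 : Type := Fin 2 → ZMod 2

/-- The point set of the extension construction for order 31:
`(GF(2)^3 × GF(2)^2) \ {(0,0)}`. -/
abbrev SPt31 : Type := {p : V3 × V2 // p ≠ 0}

/-- The triples of the incidence structure `S(f)` associated with a factor
system `f : GF(2)^3 × GF(2)^3 → GF(2)^2`: the 3-element subsets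
`{(P,x),(Q,y),(R,z)}` of the point set with `P + Q + R = 0` and
`x + y + z = f P Q`. -/
def STrip31 (f : V3 → V3 → V2) : Set (Finset SPt31) :=
  {t | ∃ u w r : SPt31, u ≠ w ∧ u ≠ r ∧ w ≠ r ∧ t = {u, w, r} ∧
      u.1.1 + w.1.1 + r.1.1 = 0 ∧ u.1.2 + w.1.2 + r.1.2 = f u.1.1 w.1.1}

/-- The factor system `f1`: `(0,1)` on pairs of distinct nonzero vectors `P`, `Q`
with `{P,Q,P+Q} = {(0,1,1),(1,0,1),(1,1,0)}`, and `(0,0)` otherwise. -/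
noncomputable def vf1 : V3 → V3 → V2 := fun P Q =>
  if P ≠ Q ∧ P ≠ 0 ∧ Q ≠ 0 ∧
      ({P, Q, P + Q} : Finset V3) = ({![0,1,1], ![1,0,1], ![1,1,0]} : Finset V3)
  then ![0,1] else 0

/-- The factor system `f2`: on pairs of distinct nonzero vectors `P`, `Q` it is
`(0,1)` if `{P,Q,P+Q} = {(0,1,1),(1,0,0),(1,1,1)}`, `(1,0)` if
`{P,Q,P+Q} = {(0,1,1),(1,0,1),(1,1,0)}`, and `(0,0)` in all other cases. -/
noncomputable def vf2 : V3 → V3 → V2 := fun P Q =>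
  if P ≠ Q ∧ P ≠ 0 ∧ Q ≠ 0 ∧
      ({P, Q, P + Q} : Finset V3) = ({![0,1,1], ![1,0,0], ![1,1,1]} : Finset V3)
  then ![0,1]
  else if P ≠ Q ∧ P ≠ 0 ∧ Q ≠ 0 ∧
      ({P, Q, P + Q} : Finset V3) = ({![0,1,1], ![1,0,1], ![1,1,0]} : Finset V3)
  then ![1,0] else 0

/-- The distinguished line `{(0,1,1),(1,0,1),(1,1,0)}` is the set of nonzero vectors of coordinate
sum zero. -/
theorem vf1_eq (P Q : V3) : vf1 P Q =
    if P ≠ Q ∧ P ≠ 0 ∧ Q ≠ 0 ∧ P 0 + P 1 + P 2 = 0 ∧ Q 0 + Q 1 + Q 2 = 0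
    then ![0, 1] else 0 := by
  unfold vf1
  congr 1
  revert P Q
  simp only [Finset.ext_iff, Finset.mem_insert, Finset.mem_singleton, eq_iff_iff]
  decide +kernel

theorem vf1_symm (P Q : V3) : vf1 P Q = vf1 Q P := by
  simp only [vf1_eq]; revert P Q; decide +kernel

theorem vf1_add (P Q : V3) : vf1 P (P + Q) = vf1 P Q := by
  simp only [vf1_eq]; revert P Q; decide +kernel

theorem vf1_zero_right (P : V3) : vf1 P 0 = 0 := by simp [vf1_eq]

theorem vf1_zero_left (P : V3) : vf1 0 P = 0 := by simp [vf1_eq]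

theorem vf1_self (P : V3) : vf1 P P = 0 := by simp [vf1_eq]

/-- Every nonzero `P` violates the cocycle-type identity that a Veblen point over `P` would
impose. -/
theorem exists_vf1_obstruction (P : V3) (hP : P ≠ 0) : ∃ A C : V3, A ≠ 0 ∧ C ≠ 0 ∧ P ≠ A ∧ P ≠ C ∧
    A ≠ C ∧ vf1 P A + vf1 P C + vf1 A C + vf1 (P + A) (P + C) ≠ 0 := by
  simp only [vf1_eq]; revert P; decide +kernel

/-- The Steiner loop product on `V3 × V2` whose identity is `(0, 0)`. -/
noncomputable def vmul (u w : V3 × V2) : V3 × V2 :=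
  (u.1 + w.1, u.2 + w.2 + vf1 u.1 w.1)

theorem vmul_comm (u w : V3 × V2) : vmul u w = vmul w u := by
  simp only [vmul, vf1_symm u.1 w.1, add_comm u.1, add_comm u.2]

theorem vmul_self (u : V3 × V2) : vmul u u = 0 := by
  simp only [vmul, vf1_self, CharTwo.add_self_eq_zero]; rfl

theorem vmul_cancel (u w : V3 × V2) : vmul u (vmul u w) = w := by
  have h : ∀ x y z : V2, x + (x + y + z) + z = y := by decide +kernel
  simp only [vmul, vf1_add, CharTwo.add_cancel_left, h]

theorem vmul_zero (u : V3 × V2) : vmul u 0 = u := by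
  simp [vmul, vf1_zero_right]

theorem vmul_ne_zero {u w : V3 × V2} (h : u ≠ w) : vmul u w ≠ 0 := fun h0 => h <| by
  rw [← vmul_cancel u w, h0, vmul_zero]

theorem vmul_ne_left {u w : V3 × V2} (h : w ≠ 0) : vmul u w ≠ u := fun h0 => h <| by
  rw [← vmul_cancel u w, h0, vmul_self]

theorem vmul_ne_right {u w : V3 × V2} (h : u ≠ 0) : vmul u w ≠ w := by
  rw [vmul_comm]; exact vmul_ne_left h

theorem eq_vmul_iff (u w r : V3 × V2) :
    r = vmul u w ↔ u.1 + w.1 + r.1 = 0 ∧ u.2 + w.2 + r.2 = vf1 u.1 w.1 := by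
  have h3 : ∀ x y : V3, y = x ↔ x + y = 0 := by decide +kernel
  have h2 : ∀ x y z : V2, y = x + z ↔ x + y = z := by decide +kernel
  rw [Prod.ext_iff, vmul, h3, h2]

/-- The relation `c = a * b` is invariant under these two transpositions of its entries, hence under
all permutations. -/
theorem eq_vmul_rotate {a b c : V3 × V2} (h : c = vmul a b) : b = vmul a c ∧ c = vmul b a := by
  subst h; exact ⟨(vmul_cancel a b).symm, vmul_comm a b⟩

theorem mem_triples_iff (a b c : SPt31) :
    ({a, b, c} : Finset SPt31) ∈ STrip31 vf1 ↔ a ≠ b ∧ c.1 = vmul a.1 b.1 := by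
  constructor
  · rintro ⟨u, w, r, huw, hur, hwr, ht, h1, h2⟩
    have hr := (eq_vmul_iff _ _ _).2 ⟨h1, h2⟩
    have hcard : ({a, b, c} : Finset SPt31).card = 3 := by
      rw [ht]; exact Finset.card_eq_three.2 ⟨u, w, r, huw, hur, hwr, rfl⟩
    have hab : a ≠ b := by
      rintro rfl
      have := Finset.card_le_two (a := a) (b := c)
      simp at hcard
      omega
    have hac : a ≠ c := by
      rintro rfl
      have := Finset.card_le_two (a := b) (b := a)
      simp at hcard
      omega
    have hbc : b ≠ c := by
      rintro rfl
      have := Finset.card_le_two (a := a) (b := b)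
      simp at hcard
      omega
    refine ⟨hab, ?_⟩
    have ha : a ∈ ({u, w, r} : Finset SPt31) := ht ▸ by simp
    have hb : b ∈ ({u, w, r} : Finset SPt31) := ht ▸ by simp
    have hc : c ∈ ({u, w, r} : Finset SPt31) := ht ▸ by simp
    have e1 := eq_vmul_rotate hr
    have e2 := eq_vmul_rotate e1.1
    have e3 := eq_vmul_rotate e1.2
    have e4 := eq_vmul_rotate e3.1
    simp only [Finset.mem_insert, Finset.mem_singleton] at ha hb hc
    rcases ha with rfl | rfl | rfl <;> rcases hb with rfl | rfl | rfl <;>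
      rcases hc with rfl | rfl | rfl <;>
        first
        | exact absurd rfl hab
        | exact absurd rfl hac
        | exact absurd rfl hbc
        | tauto
  · rintro ⟨hab, hc⟩
    refine ⟨a, b, c, hab, fun h => ?_, fun h => ?_, rfl, (eq_vmul_iff _ _ _).1 hc⟩
    · exact vmul_ne_left b.2 (hc.symm.trans (congrArg Subtype.val h).symm)
    · exact vmul_ne_right a.2 (hc.symm.trans (congrArg Subtype.val h).symm)

/-- The third point of the triple through two distinct points. -/
noncomputable def third (a b : SPt31) (h : a ≠ b) : SPt31 :=
  ⟨vmul a.1 b.1, vmul_ne_zero fun e => h (Subtype.ext e)⟩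

theorem isSTS_vf1 : IsSTS (STrip31 vf1) := by
  refine ⟨?_, fun a b hab => ⟨{a, b, third a b hab}, ⟨?_, by simp, by simp⟩, ?_⟩⟩
  · rintro t ⟨u, w, r, huw, hur, hwr, rfl, -⟩
    exact Finset.card_eq_three.2 ⟨u, w, r, huw, hur, hwr, rfl⟩
  · exact (mem_triples_iff _ _ _).2 ⟨hab, rfl⟩
  · rintro t ⟨ht, ha, hb⟩
    -- Any triple containing `a` and `b` is `{a, b, c}` for some `c`, and then `c` is determined.
    have key : ∃ c, t = {a, b, c} := by
      obtain ⟨u, w, r, -, -, -, rfl, -⟩ := ht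
      simp only [Finset.mem_insert, Finset.mem_singleton] at ha hb
      rcases ha with ha | ha | ha <;> rcases hb with hb | hb | hb <;>
        first
        | exact absurd (ha.trans hb.symm) hab
        | (refine ⟨u, ?_⟩; ext; simp only [Finset.mem_insert, Finset.mem_singleton]; grind)
        | (refine ⟨w, ?_⟩; ext; simp only [Finset.mem_insert, Finset.mem_singleton]; grind)
        | (refine ⟨r, ?_⟩; ext; simp only [Finset.mem_insert, Finset.mem_singleton]; grind)
    obtain ⟨c, rfl⟩ := key
    have hc : c = third a b hab := Subtype.ext ((mem_triples_iff _ _ _).1 ht).2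
    rw [hc]

theorem isVeblen_of_fst_eq_zero (p : SPt31) (hp : p.1.1 = 0) : IsVeblen (STrip31 vf1) p := by
  intro a b c d t h1 h2 h3
  rw [mem_triples_iff] at h1 h2 h3
  obtain ⟨-, hb⟩ := h1
  obtain ⟨-, hd⟩ := h2
  obtain ⟨hta, hc⟩ := h3
  have ht : t.1 = vmul a.1 c.1 := by rw [hc, vmul_comm t.1, vmul_cancel]
  have hac : a.1 ≠ c.1 := fun h => t.2 (by rw [ht, h, vmul_self])
  have hbd : b.1 ≠ d.1 := fun h => hac <| by
    rw [← vmul_cancel p.1 a.1, ← hb, h, hd, vmul_cancel]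
  have htbd : t.1 = vmul b.1 d.1 := by
    have h : ∀ x y z w : V2, x + y + w = z + x + (z + y) + w := by decide +kernel
    rw [ht, hb, hd]
    simp only [vmul, hp, vf1_zero_left, zero_add, add_zero, ← h]
  rw [mem_triples_iff]
  refine ⟨fun h => ?_, by rw [htbd, vmul_comm b.1, vmul_comm _ b.1, vmul_comm d.1, vmul_cancel]⟩
  exact vmul_ne_left d.2 (htbd.symm.trans (congrArg Subtype.val h))

theorem fst_eq_zero_of_isVeblen (p : SPt31) (h : IsVeblen (STrip31 vf1) p) : p.1.1 = 0 := by
  by_contra hP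
  obtain ⟨A, C, hA, hC, hPA, hPC, hAC, hne⟩ := exists_vf1_obstruction p.1.1 hP
  let a : SPt31 := ⟨(A, 0), fun e => hA (congrArg Prod.fst e)⟩
  let c : SPt31 := ⟨(C, 0), fun e => hC (congrArg Prod.fst e)⟩
  have hpa : p ≠ a := fun e => hPA (congrArg (fun q : SPt31 => q.1.1) e)
  have hpc : p ≠ c := fun e => hPC (congrArg (fun q : SPt31 => q.1.1) e)
  have hac : a ≠ c := fun e => hAC (congrArg (fun q : SPt31 => q.1.1) e)
  have hrot : ∀ u w : V3 × V2, w = vmul (vmul u w) u := fun u w => by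
    rw [vmul_comm, vmul_cancel]
  have key := h a (third p a hpa) c (third p c hpc) (third a c hac)
    ((mem_triples_iff _ _ _).2 ⟨hpa, rfl⟩) ((mem_triples_iff _ _ _).2 ⟨hpc, rfl⟩)
    ((mem_triples_iff _ _ _).2
      ⟨fun e => vmul_ne_left c.2 (congrArg Subtype.val e), hrot a.1 c.1⟩)
  rw [mem_triples_iff] at key
  obtain ⟨-, hd⟩ := key
  have ht : vmul a.1 c.1 = vmul (vmul p.1 a.1) (vmul p.1 c.1) := by
    have hd' : vmul p.1 c.1 = vmul (vmul a.1 c.1) (vmul p.1 a.1) := hd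
    rw [hd', vmul_comm (vmul a.1 c.1), vmul_cancel]
  have h2 := congrArg Prod.snd ht
  have hV : ∀ x f g k l : V2, 0 + 0 + k = x + 0 + f + (x + 0 + g) + l → f + g + k + l = 0 := by
    decide +kernel
  exact hne (hV _ _ _ _ _ h2)

/-- The structure `S(f1)` is a Steiner triple system of order 31 whose Veblen
points are exactly the three points `(0,a)` with `a` a nonzero vector of
`GF(2)^2`. -/
theorem sts31_from_vf1 :
    Nat.card SPt31 = 31 ∧ IsSTS (STrip31 vf1) ∧
    {p : SPt31 | IsVeblen (STrip31 vf1) p} =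
      {p : SPt31 | p.1.1 = 0 ∧ p.1.2 ≠ 0} := by
  refine ⟨?_, isSTS_vf1, Set.ext fun p => ⟨fun h => ?_, fun h => isVeblen_of_fst_eq_zero p h.1⟩⟩
  · rw [Nat.card_eq_fintype_card, Fintype.card_subtype_compl, Fintype.card_subtype_eq]
    simp [ZMod.card]
  · have hp := fst_eq_zero_of_isVeblen p h
    exact ⟨hp, fun h2 => p.2 (Prod.ext hp h2)⟩
end

section
/- Let f2: GF(2)^3 × GF(2)^3 → GF(2)^2 be the symmetric function defined on pairs of distinct nonzero vectors P, Q by: f2(P,Q) = (0,1) if {P,Q,P+Q} = {(0,1,1),(1,0,0),(1,1,1)}, f2(P,Q) = (1,0) if {P,Q,P+Q} = {(0,1,1),(1,0,1),(1,1,0)}, and f2(P,Q) = (0,0) in all other cases (including P=Q, P=0 or Q=0). Then the incidence structure S(f2) is a Steiner triple system of order 31 whose Veblen points are exactly the three points (0,a) with a a nonzero vector of GF(2)^2. -/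
/-!
Write `op f p q = (p.1 + q.1, p.2 + q.2 + f p.1 q.1)` on `GF(2)^3 × GF(2)^2`. When `f` is a
factor system (`IsFactor`), the relation `Line f p q r`, i.e. `r = op f p q`, is totally symmetric,
and two distinct nonzero elements have a nonzero product different from both (`op` is a
Steiner loop operation). Hence `{a, b, c}` is a triple of `S(f)` exactly when `a ≠ b` and
`c = op f a b` (`mem_iff`), which gives the Steiner triple system (`isSTS`).

In terms of `op`, a point `x` is Veblen when `op (op x a) (op x c) = op a c` for all admissible
`a, c`. If `x = (0, s)`, multiplication by `x` merely adds `s` to the second coordinate, the two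
copies of `s` cancel, and `x` is Veblen (`isVeblen_of_fst_eq_zero`). If `x` lies over `P ≠ 0`, then
testing with `a = (A, 0)` and `c = (C, 0)` shows that
`f P A + f P C + f (P + A) (P + C) = f A C` would have to hold (`IsVeblen.factor_eq`); for `vf2`
a finite computation finds `A, C` violating it for each of the seven vectors `P` (`vf2_defect`).
-/


universe u v

open scoped Classical

/-- The conditions on a factor system. The last one encodes that `f` is constant on the pairs
of a line `{P, Q, P + Q}`. -/
structure IsFactor (f : V3 → V3 → V2) : Prop where
  symm : ∀ P Q, f P Q = f Q P
  zero_right : ∀ P, f P 0 = 0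
  self : ∀ P, f P P = 0
  line : ∀ P Q, f P (P + Q) = f P Q

/-- The Steiner loop operation attached to `f`. -/
def op (f : V3 → V3 → V2) (p q : V3 × V2) : V3 × V2 :=
  (p.1 + q.1, p.2 + q.2 + f p.1 q.1)

/-- The equations defining the triples of `S(f)`, without any distinctness condition. -/
def Line (f : V3 → V3 → V2) (p q r : V3 × V2) : Prop :=
  p.1 + q.1 + r.1 = 0 ∧ p.2 + q.2 + r.2 = f p.1 q.1

theorem v3_add_eq_zero {x y : V3} : x + y = 0 ↔ y = x := by
  revert x y; decide

theorem v2_add_eq {x y z : V2} : x + y = z ↔ y = x + z := by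
  revert x y z; decide

theorem line_iff {f : V3 → V3 → V2} {p q r : V3 × V2} : Line f p q r ↔ r = op f p q := by
  rw [Line, op, Prod.ext_iff, v3_add_eq_zero, v2_add_eq]

theorem Line.swap {f : V3 → V3 → V2} (hf : IsFactor f) {p q r : V3 × V2} (h : Line f p q r) :
    Line f q p r := by
  refine ⟨?_, ?_⟩
  · rw [add_comm q.1]; exact h.1
  · rw [add_comm q.2, hf.symm]; exact h.2

theorem Line.rot {f : V3 → V3 → V2} (hf : IsFactor f) {p q r : V3 × V2} (h : Line f p q r) :
    Line f p r q := by
  refine ⟨?_, ?_⟩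
  · rw [add_right_comm]; exact h.1
  · rw [add_right_comm, v3_add_eq_zero.1 h.1, hf.line]; exact h.2

theorem op_self {f : V3 → V3 → V2} (hf : IsFactor f) (p : V3 × V2) : op f p p = 0 := by
  have h3 : p.1 + p.1 = 0 := v3_add_eq_zero.2 rfl
  have h2 : p.2 + p.2 = 0 := v2_add_eq.2 (by simp)
  simp [op, hf.self, h3, h2]

theorem op_zero {f : V3 → V3 → V2} (hf : IsFactor f) (p : V3 × V2) : op f p 0 = p := by
  simp [op, hf.zero_right]

/-- Two members of a `Line` coincide only if the third one is `0`. -/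
theorem Line.ne {f : V3 → V3 → V2} (hf : IsFactor f) {p q r : V3 × V2} (h : Line f p q r)
    (hr : r ≠ 0) : p ≠ q := by
  rintro rfl
  exact hr ((line_iff.1 h).trans (op_self hf p))

theorem mem_iff {f : V3 → V3 → V2} (hf : IsFactor f) {a b c : SPt31} :
    ({a, b, c} : Finset SPt31) ∈ STrip31 f ↔ a ≠ b ∧ c.1 = op f a.1 b.1 := by
  rw [← line_iff]
  constructor
  · rintro ⟨u, w, r, huw, hur, hwr, ht, h1, h2⟩
    have h : Line f u.1 w.1 r.1 := ⟨h1, h2⟩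
    have hcard : ({a, b, c} : Finset SPt31).card = 3 := by
      rw [ht]; exact Finset.card_eq_three.2 ⟨u, w, r, huw, hur, hwr, rfl⟩
    have hab : a ≠ b := by
      rintro rfl
      have := Finset.card_le_two (a := a) (b := c)
      simp at hcard; omega
    have hac : a ≠ c := by
      rintro rfl
      have := Finset.card_le_two (a := a) (b := b)
      rw [Finset.pair_comm b a] at hcard
      simp at hcard; omega
    have hbc : b ≠ c := by
      rintro rfl
      have := Finset.card_le_two (a := a) (b := b)
      simp at hcard; omega
    have ha : a ∈ ({u, w, r} : Finset SPt31) := ht ▸ by simp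
    have hb : b ∈ ({u, w, r} : Finset SPt31) := ht ▸ by simp
    have hc : c ∈ ({u, w, r} : Finset SPt31) := ht ▸ by simp
    refine ⟨hab, ?_⟩
    simp only [Finset.mem_insert, Finset.mem_singleton] at ha hb hc
    -- `(a, b, c)` is one of the six permutations of `(u, w, r)`.
    rcases ha with rfl | rfl | rfl <;> rcases hb with rfl | rfl | rfl <;>
      rcases hc with rfl | rfl | rfl <;> first | contradiction | skip
    · exact h
    · exact h.rot hf
    · exact h.swap hf
    · exact (h.swap hf).rot hf
    · exact (h.rot hf).swap hf
    · exact ((h.swap hf).rot hf).swap hf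
  · rintro ⟨hab, h⟩
    refine ⟨a, b, c, hab, ?_, ?_, rfl, h.1, h.2⟩
    · exact fun e => (h.rot hf).ne hf b.2 (congrArg _ e)
    · exact fun e => ((h.swap hf).rot hf).ne hf a.2 (congrArg _ e)

theorem op_ne_zero {f : V3 → V3 → V2} (hf : IsFactor f) {p q : V3 × V2} (h : p ≠ q) :
    op f p q ≠ 0 := by
  intro h0
  have hl : Line f p q 0 := line_iff.2 h0.symm
  have := line_iff.1 (hl.rot hf)
  rw [op_zero hf] at this
  exact h this.symm

theorem isSTS {f : V3 → V3 → V2} (hf : IsFactor f) : IsSTS (STrip31 f) := by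
  refine ⟨?_, ?_⟩
  · rintro t ⟨u, w, r, huw, hur, hwr, ht, -⟩
    exact Finset.card_eq_three.2 ⟨u, w, r, huw, hur, hwr, ht⟩
  · intro a b hab
    have hab' : a.1 ≠ b.1 := fun e => hab (Subtype.ext e)
    refine ⟨{a, b, ⟨op f a.1 b.1, op_ne_zero hf hab'⟩},
      ⟨(mem_iff hf).2 ⟨hab, rfl⟩, by simp, by simp⟩, ?_⟩
    rintro t ⟨ht, hat, hbt⟩
    obtain ⟨c, rfl⟩ : ∃ c, t = {a, b, c} := by
      obtain ⟨u, w, r, -, -, -, rfl, -⟩ := ht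
      simp only [Finset.mem_insert, Finset.mem_singleton] at hat hbt
      rcases hat with rfl | rfl | rfl <;> rcases hbt with rfl | rfl | rfl <;>
        first | contradiction | skip
      · exact ⟨r, rfl⟩
      · exact ⟨w, by ext; simp; tauto⟩
      · exact ⟨r, by ext; simp; tauto⟩
      · exact ⟨u, by ext; simp; tauto⟩
      · exact ⟨w, by ext; simp; tauto⟩
      · exact ⟨u, by ext; simp; tauto⟩
    have hc : c = ⟨op f a.1 b.1, op_ne_zero hf hab'⟩ := Subtype.ext ((mem_iff hf).1 ht).2
    rw [hc]

theorem isVeblen_of_fst_eq_zero_s17 {f : V3 → V3 → V2} (hf : IsFactor f) {x : SPt31}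
    (hx : x.1.1 = 0) : IsVeblen (STrip31 f) x := by
  intro a b c d t h1 h2 h3
  obtain ⟨-, hb⟩ := (mem_iff hf).1 h1
  obtain ⟨-, hd⟩ := (mem_iff hf).1 h2
  have h3' : ({a, c, t} : Finset SPt31) ∈ STrip31 f := by
    rwa [show ({a, c, t} : Finset SPt31) = {t, a, c} by ext; simp; tauto]
  obtain ⟨hac, ht⟩ := (mem_iff hf).1 h3'
  rw [show ({t, b, d} : Finset SPt31) = {b, d, t} by ext; simp; tauto]
  have hz : ∀ P, f 0 P = 0 := fun P => (hf.symm 0 P).trans (hf.zero_right P)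
  -- multiplication by `x` is translation by `x.1.2` in the second coordinate
  have hmul : ∀ p, op f x.1 p = (p.1, x.1.2 + p.2) := fun p => by simp [op, hx, hz]
  rw [hmul] at hb hd
  refine (mem_iff hf).2 ⟨?_, ?_⟩
  · rintro rfl
    rw [hb, Prod.ext_iff] at hd
    exact hac (Subtype.ext (Prod.ext hd.1 (add_left_cancel hd.2)))
  · have hcancel : ∀ s y z : V2, s + y + (s + z) = y + z := by decide
    rw [ht, hb, hd]
    simp [op, hcancel]

/-- The identity on `f` forced by a Veblen point over `P`, obtained by testing the Veblen
property with the points `(A, 0)` and `(C, 0)`. -/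
theorem IsVeblen.factor_eq {f : V3 → V3 → V2} (hf : IsFactor f) {x : SPt31}
    (hx : IsVeblen (STrip31 f) x) {A C : V3} (hA : A ≠ 0) (hC : C ≠ 0) (hAC : A ≠ C)
    (hxA : x.1.1 ≠ A) (hxC : x.1.1 ≠ C) :
    f x.1.1 A + f x.1.1 C + f (x.1.1 + A) (x.1.1 + C) = f A C := by
  have hne : ∀ p q : V3 × V2, p.1 ≠ q.1 → p ≠ q := fun p q h e => h (congrArg _ e)
  let a : SPt31 := ⟨(A, 0), hne _ _ hA⟩
  let c : SPt31 := ⟨(C, 0), hne _ _ hC⟩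
  let b : SPt31 := ⟨op f x.1 a.1, op_ne_zero hf (hne _ _ hxA)⟩
  let d : SPt31 := ⟨op f x.1 c.1, op_ne_zero hf (hne _ _ hxC)⟩
  let t : SPt31 := ⟨op f a.1 c.1, op_ne_zero hf (hne _ _ hAC)⟩
  have hsub : ∀ p q : SPt31, p.1.1 ≠ q.1.1 → p ≠ q := fun p q h e => h (e ▸ rfl)
  have h := hx a b c d t ((mem_iff hf).2 ⟨hsub _ _ hxA, rfl⟩)
    ((mem_iff hf).2 ⟨hsub _ _ hxC, rfl⟩)
    (by
      rw [show ({t, a, c} : Finset SPt31) = {a, c, t} by ext; simp; tauto]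
      exact (mem_iff hf).2 ⟨hsub _ _ hAC, rfl⟩)
  rw [show ({t, b, d} : Finset SPt31) = {b, d, t} by ext; simp; tauto] at h
  have h2 := congrArg Prod.snd ((mem_iff hf).1 h).2
  have hcancel : ∀ s y z w v : V2, v = s + y + (s + z) + w → y + z + w = v := by decide
  exact hcancel x.1.2 _ _ _ _ (by simpa [op, a, b, c, d, t] using h2)

theorem isFactor_vf2 : IsFactor vf2 where
  symm := by decide +kernel
  zero_right := by decide +kernel
  self := by decide +kernel
  line := by decide +kernel

/-- For each `P ≠ 0` the identity of `IsVeblen.factor_eq` fails for some `A, C`. -/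
theorem vf2_defect : ∀ P : V3, P ≠ 0 → ∃ A C : V3, A ≠ 0 ∧ C ≠ 0 ∧ A ≠ C ∧ P ≠ A ∧ P ≠ C ∧
    vf2 P A + vf2 P C + vf2 (P + A) (P + C) ≠ vf2 A C := by
  decide +kernel

/-- The structure `S(f2)` is a Steiner triple system of order 31 whose Veblen
points are exactly the three points `(0,a)` with `a` a nonzero vector of
`GF(2)^2`. -/
theorem sts31_from_vf2 :
    Nat.card SPt31 = 31 ∧ IsSTS (STrip31 vf2) ∧
    {p : SPt31 | IsVeblen (STrip31 vf2) p} =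
      {p : SPt31 | p.1.1 = 0 ∧ p.1.2 ≠ 0} := by
  refine ⟨?_, isSTS isFactor_vf2, ?_⟩
  · rw [Nat.card_eq_fintype_card, Fintype.card_subtype_compl, Fintype.card_subtype_eq]
    simp
  · ext x
    refine ⟨fun hx => ?_, fun hx => isVeblen_of_fst_eq_zero_s17 isFactor_vf2 hx.1⟩
    have h0 : x.1.1 = 0 := by
      by_contra hP
      obtain ⟨A, C, hA, hC, hAC, hPA, hPC, hne⟩ := vf2_defect x.1.1 hP
      exact hne (IsVeblen.factor_eq isFactor_vf2 hx hA hC hAC hPA hPC)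
    exact ⟨h0, fun h2 => x.2 (Prod.ext h0 h2)⟩
end
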